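/- arXiv:math/0306218 — 3 statements merged into one kernel-verified Lean document; each statement's English description precedes it below -/
import Mathlib

section
/- Assume Q_k = k + O(1). If P = (P_k)_{k≥1} is a sequence of positive reals with φ_j(P,P) = Q_j for all j ≥ 1, and if there exist α > 0 and C ≥ 1 such that C^{-1} k^α ≤ P_k ≤ C k^α for all k ≥ 1, then α = α_θ = 1 + θ/π. -/
open Filter Asymptotics MeasureTheory
open scoped ENNReal Topology

/-- `Theta θ E' E` is the argument of the complex number `E' + E·e^{iθ}`;
for `0 < θ < π` and `E', E > 0` it lies in `(0, θ)` and equals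
`arctan (sin θ / (E'/E + cos θ))` with the branch taken in `(0, θ)`. -/
noncomputable def Theta (θ E' E : ℝ) : ℝ :=
  Complex.arg ((E' : ℂ) + (E : ℂ) * Complex.exp (θ * Complex.I))

/-- `phi θ X Y j = (1/π) · ∑_{k ≥ 1} Θ(X_k, Y_j) ∈ (0, ∞]`, where sequences are
indexed by `ℕ` and only the values at indices `k ≥ 1` are used. -/
noncomputable def phi (θ : ℝ) (X Y : ℕ → ℝ) (j : ℕ) : ℝ≥0∞ :=
  ENNReal.ofReal (1 / Real.pi) * ∑' k : ℕ, ENNReal.ofReal (Theta θ (X (k + 1)) (Y j))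

/-- `Pker θ E E' = E·E' / (E² + 2·cos θ·E·E' + E'²)`. -/
noncomputable def Pker (θ E E' : ℝ) : ℝ :=
  E * E' / (E ^ 2 + 2 * Real.cos θ * E * E' + E' ^ 2)

/-- The drift `D_α = (1/π) ∫_0^∞ Θ(s^α, 1) ds`. -/
noncomputable def Drift (θ α : ℝ) : ℝ :=
  (1 / Real.pi) * ∫ s in Set.Ioi (0 : ℝ), Theta θ (s ^ α) 1

/-- `S_ε = ∫_0^∞ s^{-ε} / (s^{α_θ} + 2 cos θ + s^{-α_θ}) ds` with `α_θ = 1 + θ/π`. -/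
noncomputable def Sfun (θ ε : ℝ) : ℝ :=
  ∫ s in Set.Ioi (0 : ℝ), s ^ (-ε) /
    (s ^ (1 + θ / Real.pi) + 2 * Real.cos θ + s ^ (-(1 + θ / Real.pi)))


lemma theta_scale (θ E' E : ℝ) (h' : 0 < E') : Theta θ E' E = Theta θ 1 (E / E') := by
  unfold Theta
  rw [← Complex.arg_real_mul (((1 : ℝ) : ℂ) + ((E / E' : ℝ) : ℂ) * _) h']
  congr 1
  have : (E' : ℂ) ≠ 0 := by exact_mod_cast h'.ne'
  push_cast
  field_simp

lemma theta_one_re (θ u : ℝ) :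
    (((1 : ℝ) : ℂ) + (u : ℂ) * Complex.exp (θ * Complex.I)).re = 1 + u * Real.cos θ := by
  simp [Complex.exp_ofReal_mul_I_re]

lemma theta_one_im (θ u : ℝ) :
    (((1 : ℝ) : ℂ) + (u : ℂ) * Complex.exp (θ * Complex.I)).im = u * Real.sin θ := by
  simp [Complex.exp_ofReal_mul_I_im]

lemma theta_nonneg (θ : ℝ) (hθ : 0 < θ) (hθπ : θ < Real.pi) (u : ℝ) (hu : 0 ≤ u) :
    0 ≤ Theta θ 1 u := by
  unfold Theta
  rw [Complex.arg_nonneg_iff, theta_one_im]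
  have := Real.sin_pos_of_pos_of_lt_pi hθ hθπ
  positivity

lemma theta_lt_pi (θ : ℝ) (hθ : 0 < θ) (hθπ : θ < Real.pi) (u : ℝ) (hu : 0 ≤ u) :
    Theta θ 1 u < Real.pi := by
  unfold Theta
  rw [Complex.arg_lt_pi_iff, theta_one_im, theta_one_re]
  have := Real.sin_pos_of_pos_of_lt_pi hθ hθπ
  rcases hu.eq_or_lt with rfl | hu
  · left; simp
  · right; positivity

lemma theta_mono (θ : ℝ) (hθ : 0 < θ) (hθπ : θ < Real.pi) (u v : ℝ) (hu : 0 ≤ u) (huv : u ≤ v) :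
    Theta θ 1 u ≤ Theta θ 1 v := by
  by_contra! hlt
  have h1 := theta_nonneg θ hθ hθπ v (hu.trans huv)
  have h2 := theta_lt_pi θ hθ hθπ u hu
  have hs : 0 < Real.sin (Theta θ 1 u - Theta θ 1 v) :=
    Real.sin_pos_of_pos_of_lt_pi (by linarith) (by linarith)
  rw [Real.sin_sub] at hs
  have hsin := Real.sin_pos_of_pos_of_lt_pi hθ hθπ
  have a1 := Complex.norm_mul_cos_arg (((1 : ℝ) : ℂ) + (u : ℂ) * Complex.exp (θ * Complex.I))
  have a2 := Complex.norm_mul_sin_arg (((1 : ℝ) : ℂ) + (u : ℂ) * Complex.exp (θ * Complex.I))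
  have b1 := Complex.norm_mul_cos_arg (((1 : ℝ) : ℂ) + (v : ℂ) * Complex.exp (θ * Complex.I))
  have b2 := Complex.norm_mul_sin_arg (((1 : ℝ) : ℂ) + (v : ℂ) * Complex.exp (θ * Complex.I))
  rw [theta_one_re] at a1 b1
  rw [theta_one_im] at a2 b2
  unfold Theta at hs
  set A := ‖((1 : ℝ) : ℂ) + (u : ℂ) * Complex.exp (θ * Complex.I)‖
  set B := ‖((1 : ℝ) : ℂ) + (v : ℂ) * Complex.exp (θ * Complex.I)‖
  have hAB : 0 ≤ A * B := by positivity
  have key : A * B * (Real.sin (Complex.arg (((1 : ℝ) : ℂ) + (u : ℂ) * Complex.exp (θ * Complex.I))) *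
      Real.cos (Complex.arg (((1 : ℝ) : ℂ) + (v : ℂ) * Complex.exp (θ * Complex.I))) -
      Real.cos (Complex.arg (((1 : ℝ) : ℂ) + (u : ℂ) * Complex.exp (θ * Complex.I))) *
      Real.sin (Complex.arg (((1 : ℝ) : ℂ) + (v : ℂ) * Complex.exp (θ * Complex.I))))
      = (u - v) * Real.sin θ := by
    calc _ = (A * Real.sin (Complex.arg (((1 : ℝ) : ℂ) + (u : ℂ) * Complex.exp (θ * Complex.I)))) *
      (B * Real.cos (Complex.arg (((1 : ℝ) : ℂ) + (v : ℂ) * Complex.exp (θ * Complex.I)))) -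
      (A * Real.cos (Complex.arg (((1 : ℝ) : ℂ) + (u : ℂ) * Complex.exp (θ * Complex.I)))) *
      (B * Real.sin (Complex.arg (((1 : ℝ) : ℂ) + (v : ℂ) * Complex.exp (θ * Complex.I)))) := by ring
      _ = _ := by rw [a1, a2, b1, b2]; ring
  have h3 : u = v := by
    have := mul_nonneg hAB hs.le
    rw [key] at this
    nlinarith
  subst h3
  exact lt_irrefl _ hlt

lemma theta_le (θ : ℝ) (hθ : 0 < θ) (hθπ : θ < Real.pi) (u : ℝ) (hu : 0 ≤ u) :
    Theta θ 1 u ≤ 2 * Real.pi * min 1 u := by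
  have hp := theta_lt_pi θ hθ hθπ u hu
  have hn := theta_nonneg θ hθ hθπ u hu
  have hpi := Real.pi_pos
  rcases le_or_gt (1/2) u with h | h
  · have : 1 / 2 ≤ min 1 u := le_min (by norm_num) h
    nlinarith
  rw [min_eq_right (by linarith)]
  have hre : 1 / 2 ≤ (((1 : ℝ) : ℂ) + (u : ℂ) * Complex.exp (θ * Complex.I)).re := by
    rw [theta_one_re]
    nlinarith [Real.neg_one_le_cos θ]
  have hA : 1 / 2 ≤ ‖((1 : ℝ) : ℂ) + (u : ℂ) * Complex.exp (θ * Complex.I)‖ :=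
    hre.trans (Complex.re_le_norm _)
  have a2 := Complex.norm_mul_sin_arg (((1 : ℝ) : ℂ) + (u : ℂ) * Complex.exp (θ * Complex.I))
  rw [theta_one_im] at a2
  have h2 : Theta θ 1 u ≤ Real.pi / 2 := by
    unfold Theta
    exact (le_abs_self _).trans (Complex.abs_arg_le_pi_div_two_iff.2 (by linarith))
  have h3 := Real.mul_le_sin hn h2
  change _ * Real.sin (Theta θ 1 u) = _ at a2
  have h4 : 0 ≤ Real.sin (Theta θ 1 u) := Real.sin_nonneg_of_nonneg_of_le_pi hn hp.le
  have h5 : Real.sin (Theta θ 1 u) ≤ 2 * u := by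
    nlinarith [Real.sin_le_one θ]
  have h6 : Theta θ 1 u = Real.pi / 2 * (2 / Real.pi * Theta θ 1 u) := by field_simp
  rw [h6]
  have : 2 / Real.pi * Theta θ 1 u ≤ 2 * u := h3.trans h5
  nlinarith

lemma theta_ge (θ : ℝ) (hθ : 0 < θ) (hθπ : θ < Real.pi) (u : ℝ) (hu : 0 ≤ u) :
    Real.sin θ * u / (1 + u) ≤ Theta θ 1 u := by
  have hn := theta_nonneg θ hθ hθπ u hu
  have hp := theta_lt_pi θ hθ hθπ u hu
  have hA : ‖((1 : ℝ) : ℂ) + (u : ℂ) * Complex.exp (θ * Complex.I)‖ ≤ 1 + u := by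
    refine (norm_add_le _ _).trans ?_
    rw [norm_mul, Complex.norm_exp_ofReal_mul_I]
    simp [abs_of_nonneg hu]
  have a2 := Complex.norm_mul_sin_arg (((1 : ℝ) : ℂ) + (u : ℂ) * Complex.exp (θ * Complex.I))
  rw [theta_one_im] at a2
  change _ * Real.sin (Theta θ 1 u) = _ at a2
  have h4 : 0 ≤ Real.sin (Theta θ 1 u) := Real.sin_nonneg_of_nonneg_of_le_pi hn hp.le
  rw [div_le_iff₀ (by linarith)]
  have := Real.sin_le hn
  nlinarith

lemma theta_measurable (θ : ℝ) : Measurable fun p : ℝ × ℝ => Theta θ p.1 p.2 := by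
  unfold Theta
  exact Complex.measurable_arg.comp (by fun_prop)

lemma slit_aux {z : ℂ} (hz : z ∈ Complex.slitPlane) {u : ℝ} (hu : 0 ≤ u) :
    1 + (u : ℂ) * z ∈ Complex.slitPlane := by
  rcases hu.eq_or_lt with rfl | hu
  · simp
  rw [Complex.mem_slitPlane_iff] at hz ⊢
  rcases hz with h | h
  · left; simp; positivity
  · right; simp; exact ⟨hu.ne', h⟩

/-- integrand of the Mellin-type integral -/
noncomputable def Hker (s : ℝ) (z : ℂ) (u : ℝ) : ℂ :=
  ((u ^ (-s - 1) : ℝ) : ℂ) * Complex.log (1 + (u : ℂ) * z)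

lemma Hker_contOn {z : ℂ} (hz : z ∈ Complex.slitPlane) :
    ContinuousOn (fun u : ℝ => Complex.log (1 + (u : ℂ) * z)) (Set.Ioi 0) := by
  apply ContinuousOn.clog
  · fun_prop
  · intro u hu
    exact slit_aux hz (le_of_lt hu)

lemma Hker_integrable (s : ℝ) (hs : 0 < s) (hs1 : s < 1) {z : ℂ} (hz : z ∈ Complex.slitPlane) :
    IntegrableOn (Hker s z) (Set.Ioi 0) := by
  have h := mellinConvergent_of_isBigO_rpow (a := -s/2) (b := -1) (s := ((-s : ℝ) : ℂ))
    (f := fun u : ℝ => Complex.log (1 + (u : ℂ) * z))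
    ((Hker_contOn hz).locallyIntegrableOn measurableSet_Ioi) ?_ ?_ ?_ ?_
  · refine IntegrableOn.congr_fun h ?_ measurableSet_Ioi
    intro u hu
    simp only [Hker, smul_eq_mul]
    congr 1
    rw [Complex.ofReal_cpow (le_of_lt hu)]
    push_cast; rfl
  · have h1 : (fun u : ℝ => Complex.log (1 + (u : ℂ) * z)) =ᶠ[atTop]
        fun u : ℝ => (Real.log u : ℂ) + Complex.log ((u : ℂ)⁻¹ + z) := by
      filter_upwards [eventually_gt_atTop 0] with u hu
      have hu' : (u : ℂ) ≠ 0 := by exact_mod_cast hu.ne'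
      have e : 1 + (u : ℂ) * z = (u : ℂ) * ((u : ℂ)⁻¹ + z) := by field_simp
      rw [e, Complex.log_ofReal_mul hu]
      intro h0
      rw [h0, mul_zero] at e
      exact Complex.slitPlane_ne_zero (slit_aux hz hu.le) e
    refine h1.trans_isBigO ?_
    have hx : (fun x : ℝ => x ^ (-(-s/2))) = fun x : ℝ => x ^ (s/2) := by
      ext; congr 1; ring
    rw [hx]
    apply IsBigO.add
    · have := (isLittleO_log_rpow_atTop (show 0 < s/2 by linarith)).isBigO
      refine IsBigO.trans ?_ this
      apply IsBigO.of_bound 1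
      filter_upwards with x; simp
    · have : Tendsto (fun u : ℝ => Complex.log ((u : ℂ)⁻¹ + z)) atTop (𝓝 (Complex.log (0 + z))) := by
        refine Tendsto.clog ?_ (by simpa using hz)
        refine Tendsto.add ?_ tendsto_const_nhds
        have := (Complex.continuous_ofReal.tendsto 0).comp tendsto_inv_atTop_zero
        simpa [Function.comp_def] using this
      refine (this.isBigO_one ℝ).trans ?_
      apply IsBigO.of_bound 1
      filter_upwards [eventually_ge_atTop 1] with u hu
      have := Real.one_le_rpow hu (show 0 ≤ s/2 by linarith)
      simp only [norm_one, one_mul]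
      exact this.trans (le_abs_self _)
  · simp; linarith
  · have hd : HasDerivAt (fun u : ℝ => Complex.log (1 + (u : ℂ) * z)) z 0 := by
      have h1 : HasDerivAt (fun u : ℝ => 1 + (u : ℂ) * z) z 0 := by
        have := ((Complex.ofRealCLM.hasDerivAt (x := (0:ℝ))).mul_const z).const_add 1
        simpa using this
      have := h1.clog_real (by simp)
      simpa using this
    have := hd.isBigO_sub
    simp only [Complex.ofReal_zero, zero_mul, add_zero, Complex.log_one, sub_zero] at this
    refine (this.mono nhdsWithin_le_nhds).trans ?_
    apply IsBigO.of_bound 1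
    filter_upwards with u
    simp
  · simp; linarith

lemma lower_aux {z₀ : ℂ} (hz : z₀ ∈ Complex.slitPlane) :
    ∃ ε > 0, ∃ δ > 0, Metric.ball z₀ ε ⊆ Complex.slitPlane ∧
      ∀ z ∈ Metric.ball z₀ ε, ∀ u : ℝ, 0 ≤ u → δ * (1 + u) ≤ ‖1 + (u : ℂ) * z‖ := by
  obtain ⟨ε, hε, hsub⟩ := Metric.nhds_basis_closedBall.mem_iff.1
    (Complex.isOpen_slitPlane.mem_nhds hz)
  have hK : IsCompact ((Set.Icc (0:ℝ) 1) ×ˢ (Metric.closedBall z₀ ε)) :=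
    isCompact_Icc.prod (isCompact_closedBall _ _)
  have hne : ((Set.Icc (0:ℝ) 1) ×ˢ (Metric.closedBall z₀ ε)).Nonempty :=
    ⟨(0, z₀), by simp [hε.le]⟩
  obtain ⟨⟨t, w⟩, ⟨ht, hw⟩, hmin⟩ := hK.exists_isMinOn hne
    (f := fun p : ℝ × ℂ => ‖((1 - p.1 : ℝ) : ℂ) + (p.1 : ℂ) * p.2‖) (by fun_prop)
  refine ⟨ε, hε, ‖((1 - t : ℝ) : ℂ) + (t : ℂ) * w‖, ?_, Metric.ball_subset_closedBall.trans hsub, ?_⟩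
  · rw [gt_iff_lt, norm_pos_iff]
    apply Complex.slitPlane_ne_zero
    have := Complex.starConvex_one_slitPlane (hsub hw) (a := 1 - t) (b := t)
      (by linarith [ht.2]) ht.1 (by ring)
    simpa using this
  · intro z hz u hu
    have hu1 : 0 < 1 + u := by linarith
    have := hmin (a := (u / (1 + u), z))
      ⟨⟨by positivity, by rw [div_le_one hu1]; linarith⟩, Metric.ball_subset_closedBall hz⟩
    simp only [Set.mem_ofPred_eq] at this
    have e : 1 + (u : ℂ) * z = ((1 + u : ℝ) : ℂ) *
        (((1 - u / (1 + u) : ℝ) : ℂ) + ((u / (1 + u) : ℝ) : ℂ) * z) := by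
      have : ((1:ℂ) + u) ≠ 0 := by exact_mod_cast hu1.ne'
      push_cast
      field_simp
      ring
    rw [e, norm_mul, Complex.norm_real, Real.norm_of_nonneg hu1.le, mul_comm]
    gcongr

lemma bound_integrable (s : ℝ) (hs : 0 < s) (hs1 : s < 1) :
    IntegrableOn (fun u : ℝ => u ^ (-s) / (1 + u)) (Set.Ioi 0) := by
  have hmeas : Measurable (fun u : ℝ => u ^ (-s) / (1 + u)) := by fun_prop
  rw [← Set.Ioc_union_Ioi_eq_Ioi (zero_le_one : (0:ℝ) ≤ 1)]
  apply IntegrableOn.union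
  · have h : IntegrableOn (fun u : ℝ => u ^ (-s)) (Set.Ioc 0 1) := by
      rw [← intervalIntegrable_iff_integrableOn_Ioc_of_le zero_le_one]
      exact intervalIntegral.intervalIntegrable_rpow' (by linarith)
    refine Integrable.mono' h hmeas.aestronglyMeasurable ?_
    filter_upwards [ae_restrict_mem measurableSet_Ioc] with u hu
    have : 0 ≤ u ^ (-s) := Real.rpow_nonneg hu.1.le _
    have h2 : 0 < 1 + u := by linarith [hu.1]
    rw [Real.norm_of_nonneg (by positivity), div_le_iff₀ h2]
    nlinarith [hu.1]
  · have h : IntegrableOn (fun u : ℝ => u ^ (-s-1)) (Set.Ioi 1) :=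
      integrableOn_Ioi_rpow_of_lt (by linarith) one_pos
    refine Integrable.mono' h hmeas.aestronglyMeasurable ?_
    filter_upwards [ae_restrict_mem measurableSet_Ioi] with u hu
    have hu : 1 < u := hu
    have hu0 : 0 < u := by linarith
    have : 0 ≤ u ^ (-s) := Real.rpow_nonneg hu0.le _
    rw [Real.norm_of_nonneg (by positivity), Real.rpow_sub_one hu0.ne']
    gcongr
    linarith

lemma H_diff (s : ℝ) (hs : 0 < s) (hs1 : s < 1) :
    DifferentiableOn ℂ (fun z => ∫ u in Set.Ioi (0:ℝ), Hker s z u) Complex.slitPlane := by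
  intro z₀ hz₀
  obtain ⟨ε, hε, δ, hδ, hsub, hlow⟩ := lower_aux hz₀
  apply DifferentiableAt.differentiableWithinAt
  refine (hasDerivAt_integral_of_dominated_loc_of_deriv_le (μ := volume.restrict (Set.Ioi (0:ℝ)))
    (F := Hker s) (F' := fun z u => ((u ^ (-s - 1) : ℝ) : ℂ) * ((u : ℂ) / (1 + (u : ℂ) * z)))
    (bound := fun u => δ⁻¹ * (u ^ (-s) / (1 + u)))
    (Metric.ball_mem_nhds z₀ hε) ?_ ?_ ?_ ?_ ?_ ?_).2.differentiableAt
  · filter_upwards [Complex.isOpen_slitPlane.mem_nhds hz₀] with z hz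
    exact (Hker_integrable s hs hs1 hz).aestronglyMeasurable
  · exact Hker_integrable s hs hs1 hz₀
  · apply Measurable.aestronglyMeasurable
    fun_prop
  · filter_upwards [ae_restrict_mem measurableSet_Ioi] with u hu z hz
    have hu : 0 < u := hu
    have h1 := hlow z hz u hu.le
    have h0 : 0 < u ^ (-s-1) := Real.rpow_pos_of_pos hu _
    rw [norm_mul, norm_div, Complex.norm_real, Complex.norm_real, Real.norm_of_nonneg hu.le,
      Real.norm_of_nonneg h0.le]
    have e : u ^ (-s) = u ^ (-s-1) * u := by
      rw [Real.rpow_sub_one hu.ne']; field_simp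
    rw [e]
    have : δ⁻¹ * (u ^ (-s - 1) * u / (1 + u)) = u ^ (-s - 1) * (u / (δ * (1 + u))) := by
      field_simp
    rw [this]
    gcongr
  · exact (bound_integrable s hs hs1).const_mul _
  · filter_upwards [ae_restrict_mem measurableSet_Ioi] with u hu z hz
    have hu : 0 < u := hu
    unfold Hker
    apply HasDerivAt.const_mul
    have h1 : HasDerivAt (fun z : ℂ => 1 + (u : ℂ) * z) (u : ℂ) z := by
      simpa using ((hasDerivAt_id z).const_mul (u : ℂ)).const_add 1
    exact h1.clog (slit_aux (hsub hz) hu.le)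

lemma H_pos (s : ℝ) (r : ℝ) (hr : 0 < r) :
    ∫ u in Set.Ioi (0:ℝ), Hker s r u = (r : ℂ) ^ (s : ℂ) * ∫ u in Set.Ioi (0:ℝ), Hker s 1 u := by
  have h := integral_comp_mul_left_Ioi (fun u => Hker s 1 u) 0 hr
  rw [mul_zero] at h
  have e : ∀ u ∈ Set.Ioi (0:ℝ), Hker s r u = ((r ^ (s + 1) : ℝ) : ℂ) * Hker s 1 (r * u) := by
    intro u hu
    have hu : 0 < u := hu
    simp only [Hker, mul_one, ← mul_assoc, ← Complex.ofReal_mul]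
    rw [Real.mul_rpow hr.le hu.le, ← mul_assoc, ← Real.rpow_add hr, mul_comm u r]
    simp
  rw [setIntegral_congr_fun measurableSet_Ioi e, integral_const_mul, h, Complex.real_smul, ← mul_assoc,
    ← Complex.ofReal_mul, Real.rpow_add_one hr.ne', mul_assoc, mul_inv_cancel₀ hr.ne', mul_one,
    Complex.ofReal_cpow hr.le]

lemma H_eq (s : ℝ) (hs : 0 < s) (hs1 : s < 1) {z : ℂ} (hz : z ∈ Complex.slitPlane) :
    ∫ u in Set.Ioi (0:ℝ), Hker s z u = z ^ (s : ℂ) * ∫ u in Set.Ioi (0:ℝ), Hker s 1 u := by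
  have hf := (H_diff s hs hs1).analyticOnNhd Complex.isOpen_slitPlane
  have hg : AnalyticOnNhd ℂ (fun z : ℂ => z ^ (s : ℂ) * ∫ u in Set.Ioi (0:ℝ), Hker s 1 u)
      Complex.slitPlane := by
    apply DifferentiableOn.analyticOnNhd _ Complex.isOpen_slitPlane
    intro w hw
    apply DifferentiableAt.differentiableWithinAt
    exact ((differentiableAt_id).cpow_const hw).mul_const _
  have hc : IsPreconnected Complex.slitPlane :=
    (Complex.starConvex_one_slitPlane.isPathConnected (by simp)).isConnected.isPreconnected
  refine hf.eqOn_of_preconnected_of_frequently_eq hg hc (z₀ := 1) (by simp) ?_ hz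
  have ht : Tendsto (fun r : ℝ => (r : ℂ)) (𝓝[>] 1) (𝓝[≠] 1) := by
    apply tendsto_nhdsWithin_of_tendsto_nhds_of_eventually_within
    · have := (Complex.continuous_ofReal.tendsto 1)
      simp only [Complex.ofReal_one] at this
      exact this.mono_left nhdsWithin_le_nhds
    · filter_upwards [self_mem_nhdsWithin] with r hr
      have hr : 1 < r := hr
      simp only [Set.mem_compl_iff, Set.mem_singleton_iff]
      exact_mod_cast hr.ne'
  refine ht.frequently (Eventually.frequently ?_)
  filter_upwards [self_mem_nhdsWithin] with r hr
  have hr : 1 < r := hr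
  exact H_pos s r (by linarith)

lemma theta_eq_im (s θ u : ℝ) :
    (Hker s (Complex.exp (θ * Complex.I)) u).im = u ^ (-s - 1) * Theta θ 1 u := by
  unfold Hker Theta
  rw [Complex.im_ofReal_mul, Complex.log_im, Complex.ofReal_one]

lemma exp_slit (θ : ℝ) (hθ : 0 < θ) (hθπ : θ < Real.pi) :
    Complex.exp (θ * Complex.I) ∈ Complex.slitPlane := by
  rw [Complex.mem_slitPlane_iff]
  right
  rw [Complex.exp_ofReal_mul_I_im]
  exact (Real.sin_pos_of_pos_of_lt_pi hθ hθπ).ne'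

lemma theta_integrable (s : ℝ) (hs : 0 < s) (hs1 : s < 1) (θ : ℝ) (hθ : 0 < θ)
    (hθπ : θ < Real.pi) :
    IntegrableOn (fun u => u ^ (-s - 1) * Theta θ 1 u) (Set.Ioi 0) := by
  have h := (Hker_integrable s hs hs1 (exp_slit θ hθ hθπ)).im
  refine h.congr (Eventually.of_forall fun u => ?_)
  exact theta_eq_im s θ u

lemma theta_mellin_aux (s : ℝ) (hs : 0 < s) (hs1 : s < 1) (θ : ℝ) (hθ : 0 < θ)
    (hθπ : θ < Real.pi) :
    ∫ u in Set.Ioi (0:ℝ), u ^ (-s - 1) * Theta θ 1 u =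
      Real.sin (θ * s) * (∫ u in Set.Ioi (0:ℝ), Hker s 1 u).re := by
  have hcim : (∫ u in Set.Ioi (0:ℝ), Hker s 1 u).im = 0 := by
    have := integral_im (Hker_integrable s hs hs1 Complex.one_mem_slitPlane)
    simp only [RCLike.im_to_complex] at this
    rw [← this]
    apply setIntegral_eq_zero_of_forall_eq_zero
    intro u hu
    have hu : 0 < u := hu
    unfold Hker
    rw [Complex.im_ofReal_mul, Complex.log_im, mul_one]
    have : (1 + (u : ℂ)) = ((1 + u : ℝ) : ℂ) := by push_cast; rfl
    rw [this, Complex.arg_ofReal_of_nonneg (by linarith), mul_zero]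
  have h1 : ∫ u in Set.Ioi (0:ℝ), u ^ (-s - 1) * Theta θ 1 u =
      (∫ u in Set.Ioi (0:ℝ), Hker s (Complex.exp (θ * Complex.I)) u).im := by
    have := integral_im (Hker_integrable s hs hs1 (exp_slit θ hθ hθπ))
    simp only [RCLike.im_to_complex] at this
    rw [← this]
    congr 1
    ext u
    exact (theta_eq_im s θ u).symm
  rw [h1, H_eq s hs hs1 (exp_slit θ hθ hθπ), Complex.mul_im, hcim, mul_zero, zero_add]
  congr 1
  rw [Complex.cpow_def_of_ne_zero (Complex.exp_ne_zero _), Complex.log_exp]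
  · have : (θ : ℂ) * Complex.I * s = ((θ * s : ℝ) : ℂ) * Complex.I := by push_cast; ring
    rw [this, Complex.exp_ofReal_mul_I_im]
  · simp; linarith
  · simp; linarith

lemma min_integrable (s : ℝ) (hs : 0 < s) (hs1 : s < 1) :
    IntegrableOn (fun u : ℝ => u ^ (-s - 1) * min 1 u) (Set.Ioi 0) ∧
      ∫ u in Set.Ioi (0:ℝ), u ^ (-s - 1) * min 1 u = 1 / (1 - s) + 1 / s := by
  have h : IntegrableOn (fun u : ℝ => u ^ (-s)) (Set.Ioc 0 1) := by
    rw [← intervalIntegrable_iff_integrableOn_Ioc_of_le zero_le_one]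
    exact intervalIntegral.intervalIntegrable_rpow' (by linarith)
  have h' : IntegrableOn (fun u : ℝ => u ^ (-s-1)) (Set.Ioi 1) :=
    integrableOn_Ioi_rpow_of_lt (by linarith) one_pos
  have e : Set.EqOn (fun u : ℝ => u ^ (-s)) (fun u : ℝ => u ^ (-s - 1) * min 1 u)
      (Set.Ioc 0 1) := by
    intro u hu
    have := hu.1.ne'
    simp only
    rw [min_eq_right hu.2, Real.rpow_sub_one hu.1.ne']
    field_simp
  have e' : Set.EqOn (fun u : ℝ => u ^ (-s - 1)) (fun u : ℝ => u ^ (-s - 1) * min 1 u)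
      (Set.Ioi 1) := by
    intro u hu
    have hu : 1 < u := hu
    simp only
    rw [min_eq_left hu.le, mul_one]
  have i1 := h.congr_fun e measurableSet_Ioc
  have i2 := h'.congr_fun e' measurableSet_Ioi
  rw [← Set.Ioc_union_Ioi_eq_Ioi (zero_le_one : (0:ℝ) ≤ 1)]
  refine ⟨i1.union i2, ?_⟩
  rw [setIntegral_union (Set.Ioc_disjoint_Ioi le_rfl) measurableSet_Ioi i1 i2,
    ← setIntegral_congr_fun measurableSet_Ioc e, ← setIntegral_congr_fun measurableSet_Ioi e',
    integral_Ioi_rpow_of_lt (by linarith) one_pos, ← intervalIntegral.integral_of_le zero_le_one,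
    integral_rpow (Or.inl (by linarith))]
  simp only [Real.one_rpow]
  rw [Real.zero_rpow (by linarith)]
  congr 1
  · rw [sub_zero]; congr 1; ring
  · rw [show -s - 1 + 1 = -s by ring, neg_div_neg_eq]

lemma theta_tendsto_pi (u : ℝ) (hu : 0 < u) (hu1 : u ≠ 1) :
    Tendsto (fun θ => Theta θ 1 u) (𝓝[<] Real.pi) (𝓝 (if 1 < u then Real.pi else 0)) := by
  have hc : Continuous (fun θ : ℝ => ((1:ℝ) : ℂ) + (u : ℂ) * Complex.exp (θ * Complex.I)) := by
    fun_prop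
  have hv : ((1:ℝ) : ℂ) + (u : ℂ) * Complex.exp (Real.pi * Complex.I) = ((1 - u : ℝ) : ℂ) := by
    rw [Complex.exp_pi_mul_I]; push_cast; ring
  have ht := hc.tendsto Real.pi
  rw [hv] at ht
  split_ifs with h
  · have h1 : Complex.arg ((1 - u : ℝ) : ℂ) = Real.pi :=
      Complex.arg_ofReal_of_neg (by linarith)
    have h2 := Complex.continuousWithinAt_arg_of_re_neg_of_im_zero (z := ((1 - u : ℝ) : ℂ))
      (by rw [Complex.ofReal_re]; linarith) (Complex.ofReal_im _)
    unfold ContinuousWithinAt at h2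
    rw [h1] at h2
    refine h2.comp (tendsto_nhdsWithin_of_tendsto_nhds_of_eventually_within _
      (ht.mono_left nhdsWithin_le_nhds) ?_)
    filter_upwards [self_mem_nhdsWithin, mem_nhdsWithin_of_mem_nhds (lt_mem_nhds Real.pi_pos)]
      with θ h3 h4
    rw [theta_one_im]
    exact mul_nonneg hu.le (Real.sin_pos_of_pos_of_lt_pi h4 h3).le
  · have hlt : 0 < 1 - u := by
      rcases lt_or_gt_of_ne hu1 with h' | h' <;> linarith
    have h1 : Complex.arg ((1 - u : ℝ) : ℂ) = 0 :=
      Complex.arg_ofReal_of_nonneg hlt.le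
    have h2 := (Complex.continuousAt_arg (x := ((1 - u : ℝ) : ℂ))
      (Complex.ofReal_mem_slitPlane.2 hlt)).tendsto
    rw [h1] at h2
    exact h2.comp (ht.mono_left nhdsWithin_le_nhds)

lemma theta_mellin (s : ℝ) (hs : 0 < s) (hs1 : s < 1) (θ : ℝ) (hθ : 0 < θ)
    (hθπ : θ < Real.pi) :
    (∫ u in Set.Ioi (0:ℝ), u ^ (-s - 1) * Theta θ 1 u) * (s * Real.sin (Real.pi * s)) =
      Real.pi * Real.sin (θ * s) := by
  set c := (∫ u in Set.Ioi (0:ℝ), Hker s 1 u).re with hc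
  have hev : ∀ᶠ t : ℝ in 𝓝[<] Real.pi, 0 < t ∧ t < Real.pi := by
    filter_upwards [self_mem_nhdsWithin, mem_nhdsWithin_of_mem_nhds (lt_mem_nhds Real.pi_pos)]
      with t h3 h4
    exact ⟨h4, h3⟩
  have lim1 : Tendsto (fun t => ∫ u in Set.Ioi (0:ℝ), u ^ (-s - 1) * Theta t 1 u) (𝓝[<] Real.pi)
      (𝓝 (∫ u in Set.Ioi (0:ℝ), u ^ (-s - 1) * (if 1 < u then Real.pi else 0))) := by
    apply tendsto_integral_filter_of_dominated_convergence
      (fun u => 2 * Real.pi * (u ^ (-s - 1) * min 1 u))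
    · filter_upwards [hev] with t ht
      exact (theta_integrable s hs hs1 t ht.1 ht.2).aestronglyMeasurable
    · filter_upwards [hev] with t ht
      filter_upwards [ae_restrict_mem measurableSet_Ioi] with u hu
      have hu : 0 < u := hu
      have h0 : 0 < u ^ (-s - 1) := Real.rpow_pos_of_pos hu _
      have h1 := theta_nonneg t ht.1 ht.2 u hu.le
      have h2 := theta_le t ht.1 ht.2 u hu.le
      rw [Real.norm_of_nonneg (by positivity)]
      calc _ ≤ u ^ (-s - 1) * (2 * Real.pi * min 1 u) := by gcongr
        _ = _ := by ring
    · exact ((min_integrable s hs hs1).1).const_mul _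
    · have hne : ∀ᵐ u : ℝ ∂(volume.restrict (Set.Ioi (0:ℝ))), u ≠ 1 :=
        ae_restrict_of_ae (Measure.ae_ne volume 1)
      filter_upwards [ae_restrict_mem measurableSet_Ioi, hne] with u hu hu1
      exact (theta_tendsto_pi u hu hu1).const_mul _
  have lim2 : Tendsto (fun t => ∫ u in Set.Ioi (0:ℝ), u ^ (-s - 1) * Theta t 1 u) (𝓝[<] Real.pi)
      (𝓝 (Real.sin (Real.pi * s) * c)) := by
    have : Tendsto (fun t : ℝ => Real.sin (t * s) * c) (𝓝[<] Real.pi)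
        (𝓝 (Real.sin (Real.pi * s) * c)) := by
      have hcont : Continuous (fun t : ℝ => Real.sin (t * s) * c) := by fun_prop
      exact (hcont.tendsto Real.pi).mono_left nhdsWithin_le_nhds
    refine this.congr' ?_
    filter_upwards [hev] with t ht
    exact (theta_mellin_aux s hs hs1 t ht.1 ht.2).symm
  have heq := tendsto_nhds_unique lim2 lim1
  have hval : ∫ u in Set.Ioi (0:ℝ), u ^ (-s - 1) * (if 1 < u then Real.pi else 0) =
      Real.pi / s := by
    have e : ∀ u : ℝ, u ^ (-s - 1) * (if 1 < u then Real.pi else 0) =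
        (Set.Ioi (1:ℝ)).indicator (fun u => u ^ (-s - 1) * Real.pi) u := by
      intro u
      by_cases h : 1 < u <;> simp [h]
    simp_rw [e]
    rw [setIntegral_indicator measurableSet_Ioi, Set.inter_eq_right.2 (Set.Ioi_subset_Ioi zero_le_one),
      integral_mul_const, integral_Ioi_rpow_of_lt (by linarith) one_pos, Real.one_rpow,
      show -s - 1 + 1 = -s by ring, neg_div_neg_eq]
    ring
  rw [hval] at heq
  rw [theta_mellin_aux s hs hs1 θ hθ hθπ, ← hc]
  have : Real.sin (Real.pi * s) * c * s = Real.pi := by rw [heq]; field_simp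
  calc _ = (Real.sin (Real.pi * s) * c * s) * Real.sin (θ * s) := by ring
    _ = _ := by rw [this]

lemma scaled_mellin (s : ℝ) (hs : 0 < s) (hs1 : s < 1) (θ : ℝ) (hθ : 0 < θ)
    (hθπ : θ < Real.pi) (p : ℝ) (hp : 0 < p) :
    ∫⁻ E in Set.Ioi (0:ℝ), ENNReal.ofReal (E ^ (-s - 1)) * ENNReal.ofReal (Theta θ p E) =
      ENNReal.ofReal (p ^ (-s) * ∫ u in Set.Ioi (0:ℝ), u ^ (-s - 1) * Theta θ 1 u) := by
  have e : ∀ E ∈ Set.Ioi (0:ℝ), E ^ (-s - 1) * Theta θ p E =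
      p ^ (-s - 1) * ((p⁻¹ * E) ^ (-s - 1) * Theta θ 1 (p⁻¹ * E)) := by
    intro E hE
    have hE : 0 < E := hE
    rw [theta_scale θ p E hp, Real.mul_rpow (by positivity) hE.le, Real.inv_rpow hp.le,
      div_eq_inv_mul]
    have : p ^ (-s - 1) ≠ 0 := (Real.rpow_pos_of_pos hp _).ne'
    field_simp
  have hp' : 0 < p⁻¹ := by positivity
  have hintg : IntegrableOn (fun E => E ^ (-s - 1) * Theta θ p E) (Set.Ioi 0) := by
    refine IntegrableOn.congr_fun ?_ (fun E hE => (e E hE).symm) measurableSet_Ioi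
    apply Integrable.const_mul
    have := (integrableOn_Ioi_comp_mul_left_iff (fun u => u ^ (-s - 1) * Theta θ 1 u) 0 hp').2
      (by rw [mul_zero]; exact theta_integrable s hs hs1 θ hθ hθπ)
    exact this
  have hval : ∫ E in Set.Ioi (0:ℝ), E ^ (-s - 1) * Theta θ p E =
      p ^ (-s) * ∫ u in Set.Ioi (0:ℝ), u ^ (-s - 1) * Theta θ 1 u := by
    rw [setIntegral_congr_fun measurableSet_Ioi e, integral_const_mul,
      integral_comp_mul_left_Ioi (fun u => u ^ (-s - 1) * Theta θ 1 u) 0 hp', mul_zero, inv_inv,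
      smul_eq_mul, ← mul_assoc, Real.rpow_sub_one hp.ne']
    congr 1
    field_simp
  have hnn : 0 ≤ᵐ[volume.restrict (Set.Ioi (0:ℝ))] fun E => E ^ (-s - 1) * Theta θ p E := by
    filter_upwards [ae_restrict_mem measurableSet_Ioi] with E hE
    have hE : 0 < E := hE
    rw [theta_scale θ p E hp]
    exact mul_nonneg (Real.rpow_nonneg hE.le _) (theta_nonneg θ hθ hθπ _ (by positivity))
  rw [← hval, ofReal_integral_eq_lintegral_ofReal hintg hnn]
  apply setLIntegral_congr_fun measurableSet_Ioi
  intro E hE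
  exact (ENNReal.ofReal_mul (Real.rpow_nonneg (le_of_lt hE) _)).symm

lemma step_mellin (s : ℝ) (hs : 0 < s) (p : ℝ) (hp : 0 < p) :
    ∫⁻ E in Set.Ioi (0:ℝ), ENNReal.ofReal (E ^ (-s - 1)) * (if p ≤ E then 1 else 0) =
      ENNReal.ofReal (p ^ (-s) / s) := by
  have e : ∀ E : ℝ, ENNReal.ofReal (E ^ (-s - 1)) * (if p ≤ E then 1 else 0) =
      (Set.Ici p).indicator (fun E => ENNReal.ofReal (E ^ (-s - 1))) E := by
    intro E
    by_cases h : p ≤ E <;> simp [h]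
  simp_rw [e]
  rw [setLIntegral_indicator measurableSet_Ici,
    Set.inter_eq_left.2 (Set.Ici_subset_Ioi.2 hp), setLIntegral_congr Ioi_ae_eq_Ici.symm,
    ← ofReal_integral_eq_lintegral_ofReal (integrableOn_Ioi_rpow_of_lt (by linarith) hp),
    integral_Ioi_rpow_of_lt (by linarith) hp, show -s - 1 + 1 = -s by ring, neg_div_neg_eq]
  filter_upwards [ae_restrict_mem measurableSet_Ioi] with E hE
  exact Real.rpow_nonneg (hp.le.trans (le_of_lt hE)) _

lemma min_mellin (s : ℝ) (hs : 0 < s) (hs1 : s < 1) (B : ℝ) (hB : 0 ≤ B) :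
    ∫⁻ E in Set.Ioi (0:ℝ), ENNReal.ofReal (E ^ (-s - 1)) * ENNReal.ofReal (B * min 1 E) =
      ENNReal.ofReal (B * (1 / (1 - s) + 1 / s)) := by
  obtain ⟨h1, h2⟩ := min_integrable s hs hs1
  rw [← h2, ← integral_const_mul, ofReal_integral_eq_lintegral_ofReal (h1.const_mul _)]
  · apply setLIntegral_congr_fun measurableSet_Ioi
    intro E hE
    simp only
    rw [← ENNReal.ofReal_mul (Real.rpow_nonneg (le_of_lt hE) _)]
    congr 1; ring
  · filter_upwards [ae_restrict_mem measurableSet_Ioi] with E hE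
    have hE : 0 < E := hE
    have : 0 ≤ min 1 E := le_min zero_le_one hE.le
    have := Real.rpow_nonneg hE.le (-s-1)
    simp only [Pi.zero_apply]
    positivity

lemma main_ineq (s : ℝ) (hs : 0 < s) (hs1 : s < 1) (θ : ℝ) (hθ : 0 < θ)
    (hθπ : θ < Real.pi) (p : ℕ → ℝ) (hp : ∀ k, 0 < p k) (B : ℝ) (hB : 0 ≤ B)
    (h1 : ∀ E : ℝ, 0 < E → ENNReal.ofReal (1 / Real.pi) * ∑' k, ENNReal.ofReal (Theta θ (p k) E) ≤
      (∑' k, if p k ≤ E then (1 : ℝ≥0∞) else 0) + ENNReal.ofReal (B * min 1 E))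
    (h2 : ∀ E : ℝ, 0 < E → (∑' k, if p k ≤ E then (1 : ℝ≥0∞) else 0) ≤
      ENNReal.ofReal (1 / Real.pi) * ∑' k, ENNReal.ofReal (Theta θ (p k) E)
      + ENNReal.ofReal (B * min 1 E))
    (hsum : Summable fun k => p k ^ (-s)) :
    |Real.sin (θ * s) - Real.sin (Real.pi * s)| * ∑' k, p k ^ (-s) ≤ B / (1 - s) := by
  set Z := ∑' k, p k ^ (-s) with hZ
  have hpn : ∀ k, 0 ≤ p k ^ (-s) := fun k => Real.rpow_nonneg (hp k).le _
  have hZ0 : 0 ≤ Z := tsum_nonneg hpn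
  set m := ∫ u in Set.Ioi (0:ℝ), u ^ (-s - 1) * Theta θ 1 u with hm
  have hm0 : 0 ≤ m := by
    apply setIntegral_nonneg measurableSet_Ioi
    intro u hu
    exact mul_nonneg (Real.rpow_nonneg (le_of_lt hu) _) (theta_nonneg θ hθ hθπ u (le_of_lt hu))
  have hmv := theta_mellin s hs hs1 θ hθ hθπ
  rw [← hm] at hmv
  have mw : Measurable fun E : ℝ => ENNReal.ofReal (E ^ (-s - 1)) := by fun_prop
  have mT : ∀ k, Measurable fun E : ℝ => ENNReal.ofReal (Theta θ (p k) E) := fun k =>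
    ((theta_measurable θ).comp (measurable_const.prodMk measurable_id)).ennreal_ofReal
  have mI : ∀ k, Measurable fun E : ℝ => (if p k ≤ E then (1 : ℝ≥0∞) else 0) := fun k =>
    Measurable.ite measurableSet_Ici measurable_const measurable_const
  have mM : Measurable fun E : ℝ => ENNReal.ofReal (B * min 1 E) := by fun_prop
  have mwT : ∀ k, Measurable fun E : ℝ => ENNReal.ofReal (E ^ (-s - 1)) *
      ENNReal.ofReal (Theta θ (p k) E) := fun k => mw.mul (mT k)
  have mwI : ∀ k, Measurable fun E : ℝ => ENNReal.ofReal (E ^ (-s - 1)) *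
      (if p k ≤ E then (1 : ℝ≥0∞) else 0) := fun k => mw.mul (mI k)
  have mwM : Measurable fun E : ℝ => ENNReal.ofReal (E ^ (-s - 1)) *
      ENNReal.ofReal (B * min 1 E) := mw.mul mM
  have IF : ∫⁻ E in Set.Ioi (0:ℝ), ENNReal.ofReal (E ^ (-s - 1)) *
      (ENNReal.ofReal (1 / Real.pi) * ∑' k, ENNReal.ofReal (Theta θ (p k) E)) =
      ENNReal.ofReal (1 / Real.pi * (Z * m)) := by
    have e : ∀ E : ℝ, ENNReal.ofReal (E ^ (-s - 1)) *
      (ENNReal.ofReal (1 / Real.pi) * ∑' k, ENNReal.ofReal (Theta θ (p k) E)) =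
      ENNReal.ofReal (1 / Real.pi) * ∑' k, ENNReal.ofReal (E ^ (-s - 1)) *
        ENNReal.ofReal (Theta θ (p k) E) := by
      intro E; rw [ENNReal.tsum_mul_left]; ring
    simp_rw [e]
    rw [lintegral_const_mul _ (Measurable.tsum fun k => mwT k),
      lintegral_tsum (fun k => (mwT k).aemeasurable)]
    simp_rw [scaled_mellin s hs hs1 θ hθ hθπ _ (hp _)]
    rw [← hm, ← ENNReal.ofReal_tsum_of_nonneg (fun k => mul_nonneg (hpn k) hm0) (hsum.mul_right m),
      tsum_mul_right, ← ENNReal.ofReal_mul (by positivity)]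
  have IN : ∫⁻ E in Set.Ioi (0:ℝ), ENNReal.ofReal (E ^ (-s - 1)) *
      (∑' k, if p k ≤ E then (1 : ℝ≥0∞) else 0) = ENNReal.ofReal (Z / s) := by
    simp_rw [← ENNReal.tsum_mul_left]
    rw [lintegral_tsum (fun k => (mwI k).aemeasurable)]
    simp_rw [step_mellin s hs _ (hp _)]
    rw [← ENNReal.ofReal_tsum_of_nonneg (fun k => div_nonneg (hpn k) hs.le) (hsum.div_const s),
      tsum_div_const]
  have IB := min_mellin s hs hs1 B hB
  have hH : 0 ≤ B * (1 / (1 - s) + 1 / s) := by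
    have : 0 < 1 - s := by linarith
    positivity
  have J1 : 1 / Real.pi * (Z * m) ≤ Z / s + B * (1 / (1 - s) + 1 / s) := by
    rw [← ENNReal.ofReal_le_ofReal_iff (by positivity), ENNReal.ofReal_add (by positivity) hH,
      ← IF, ← IN, ← IB, ← lintegral_add_right _ mwM]
    apply setLIntegral_mono' measurableSet_Ioi
    intro E hE
    rw [← mul_add]
    gcongr
    exact h1 E hE
  have J2 : Z / s ≤ 1 / Real.pi * (Z * m) + B * (1 / (1 - s) + 1 / s) := by
    rw [← ENNReal.ofReal_le_ofReal_iff (by positivity), ENNReal.ofReal_add (by positivity) hH,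
      ← IF, ← IN, ← IB, ← lintegral_add_right _ mwM]
    apply setLIntegral_mono' measurableSet_Ioi
    intro E hE
    rw [← mul_add]
    gcongr
    exact h2 E hE
  have hsp : 0 < Real.sin (Real.pi * s) := by
    apply Real.sin_pos_of_pos_of_lt_pi
    · have := Real.pi_pos; positivity
    · nlinarith [Real.pi_pos]
  have hH2 : s * (B * (1 / (1 - s) + 1 / s)) = B / (1 - s) := by
    have : 1 - s ≠ 0 := by linarith
    field_simp
    ring
  have hJ : |1 / Real.pi * (Z * m) - Z / s| ≤ B * (1 / (1 - s) + 1 / s) := by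
    rw [abs_le]; constructor <;> linarith
  have key : (1 / Real.pi * (Z * m) - Z / s) * (s * Real.sin (Real.pi * s)) =
      (Real.sin (θ * s) - Real.sin (Real.pi * s)) * Z := by
    have : Real.pi ≠ 0 := Real.pi_ne_zero
    calc _ = 1 / Real.pi * Z * (m * (s * Real.sin (Real.pi * s))) - Z / s * s * Real.sin (Real.pi * s) := by
          ring
      _ = _ := by rw [hmv]; field_simp
  have hBs : 0 ≤ B / (1 - s) := div_nonneg hB (by linarith)
  calc _ = |(Real.sin (θ * s) - Real.sin (Real.pi * s)) * Z| := by rw [abs_mul, abs_of_nonneg hZ0]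
    _ = |1 / Real.pi * (Z * m) - Z / s| * (s * Real.sin (Real.pi * s)) := by
      rw [← key, abs_mul, abs_of_pos (mul_pos hs hsp)]
    _ ≤ (B * (1 / (1 - s) + 1 / s)) * (s * Real.sin (Real.pi * s)) := by gcongr
    _ = B / (1 - s) * Real.sin (Real.pi * s) := by rw [← hH2]; ring
    _ ≤ B / (1 - s) * 1 := by gcongr; exact Real.sin_le_one _
    _ = _ := mul_one _

lemma count_bounds (θ : ℝ) (hθ : 0 < θ) (hθπ : θ < Real.pi) (p q : ℕ → ℝ) (hp : ∀ k, 0 < p k)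
    (hsum : Summable fun k => (p k)⁻¹) (K : ℝ) (hK : ∀ k, |q k - ((k : ℝ) + 1)| ≤ K)
    (hq : ∀ k, 0 < q k)
    (hfix : ∀ j, ENNReal.ofReal (1 / Real.pi) * ∑' k, ENNReal.ofReal (Theta θ (p k) (p j)) =
      ENNReal.ofReal (q j))
    (e₀ : ℝ) (he₀ : 0 < e₀) (he1 : e₀ ≤ 1) (hpe : ∀ k, e₀ ≤ p k) :
    ∃ B : ℝ, 0 ≤ B ∧
    (∀ E : ℝ, 0 < E → ENNReal.ofReal (1 / Real.pi) * ∑' k, ENNReal.ofReal (Theta θ (p k) E) ≤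
      (∑' k, if p k ≤ E then (1 : ℝ≥0∞) else 0) + ENNReal.ofReal (B * min 1 E)) ∧
    (∀ E : ℝ, 0 < E → (∑' k, if p k ≤ E then (1 : ℝ≥0∞) else 0) ≤
      ENNReal.ofReal (1 / Real.pi) * ∑' k, ENNReal.ofReal (Theta θ (p k) E)
      + ENNReal.ofReal (B * min 1 E)) := by
  set F : ℝ → ℝ≥0∞ := fun E =>
    ENNReal.ofReal (1 / Real.pi) * ∑' k, ENNReal.ofReal (Theta θ (p k) E) with hF
  set S := ∑' k, (p k)⁻¹ with hS
  have hpi := Real.pi_pos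
  have hinv : ∀ k, 0 ≤ (p k)⁻¹ := fun k => (inv_pos.2 (hp k)).le
  have hS0 : 0 ≤ S := tsum_nonneg hinv
  have hK0 : 0 ≤ K := (abs_nonneg _).trans (hK 0)
  have hFle : ∀ E, 0 < E → F E ≤ ENNReal.ofReal (2 * E * S) := by
    intro E hE
    have h1 : ∑' k, ENNReal.ofReal (Theta θ (p k) E) ≤
        ∑' k, ENNReal.ofReal (2 * Real.pi * E * (p k)⁻¹) := by
      apply ENNReal.tsum_le_tsum
      intro k
      apply ENNReal.ofReal_le_ofReal
      have hk := hp k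
      rw [theta_scale θ _ _ hk]
      refine (theta_le θ hθ hθπ _ (by positivity)).trans ?_
      calc _ ≤ 2 * Real.pi * (E / p k) := by gcongr; exact min_le_right _ _
        _ = _ := by ring
    rw [← ENNReal.ofReal_tsum_of_nonneg (fun k => mul_nonneg (by positivity) (hinv k))
      (hsum.mul_left _), tsum_mul_left, ← hS] at h1
    calc F E ≤ ENNReal.ofReal (1 / Real.pi) * ENNReal.ofReal (2 * Real.pi * E * S) := by
          simp only [hF]; gcongr
      _ = _ := by
        rw [← ENNReal.ofReal_mul (by positivity)]
        congr 1; field_simp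
  have hFtop : ∀ E, 0 < E → F E ≠ ⊤ := fun E hE => ne_top_of_le_ne_top ENNReal.ofReal_ne_top (hFle E hE)
  have hFmono : ∀ E E', 0 < E → E ≤ E' → F E ≤ F E' := by
    intro E E' hE hEE
    simp only [hF]
    gcongr with k
    have hk := hp k
    rw [theta_scale θ _ E hk, theta_scale θ _ E' hk]
    apply theta_mono θ hθ hθπ _ _ (by positivity)
    gcongr
  have hFp : ∀ j, F (p j) = ENNReal.ofReal (q j) := hfix
  have hgen : ∀ E, e₀ ≤ E → K + 1 ≤ (2 * S + (K + 1) / e₀) * min 1 E := by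
    intro E hE
    have h1 : e₀ ≤ min 1 E := le_min he1 hE
    calc K + 1 = (K + 1) / e₀ * e₀ := by field_simp
      _ ≤ (2 * S + (K + 1) / e₀) * min 1 E := by gcongr; linarith
  refine ⟨2 * S + (K + 1) / e₀, by positivity, ?_, ?_⟩
  · intro E hE
    change F E ≤ _
    rcases lt_or_ge E e₀ with h | h
    · refine (hFle E hE).trans (le_add_left (ENNReal.ofReal_le_ofReal ?_))
      rw [min_eq_right (by linarith)]
      have : 0 ≤ (K + 1) / e₀ := by positivity
      nlinarith
    · set f := (F E).toReal with hf
      have hfE : F E = ENNReal.ofReal f := (ENNReal.ofReal_toReal (hFtop E hE)).symm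
      set n := ⌈f - K⌉₊ - 1 with hn
      have hin : ∀ j, j < n → p j ≤ E := by
        intro j hj
        by_contra! hlt
        have h1 := hFmono E (p j) hE hlt.le
        rw [hfE, hFp, ENNReal.ofReal_le_ofReal_iff (hq j).le] at h1
        have h2 : j + 1 < ⌈f - K⌉₊ := by omega
        rw [Nat.lt_ceil] at h2
        push_cast at h2
        have := (abs_le.1 (hK j)).2
        linarith
      have hN : (n : ℝ≥0∞) ≤ ∑' k, if p k ≤ E then (1 : ℝ≥0∞) else 0 := by
        refine le_trans (le_of_eq ?_) (ENNReal.sum_le_tsum (Finset.range n))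
        rw [Finset.sum_congr rfl (g := fun _ => (1 : ℝ≥0∞))]
        · simp
        · intro k hk
          rw [if_pos (hin k (Finset.mem_range.1 hk))]
      refine le_trans ?_ (add_le_add hN (ENNReal.ofReal_le_ofReal (hgen E h)))
      rw [hfE, ← ENNReal.ofReal_natCast, ← ENNReal.ofReal_add (by positivity) (by positivity)]
      apply ENNReal.ofReal_le_ofReal
      have h3 : f - K ≤ (⌈f - K⌉₊ : ℝ) := Nat.le_ceil _
      have h4 : ⌈f - K⌉₊ ≤ n + 1 := by omega
      have h5 : (⌈f - K⌉₊ : ℝ) ≤ (n : ℝ) + 1 := by exact_mod_cast h4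
      linarith
  · intro E hE
    change _ ≤ F E + _
    rcases lt_or_ge E e₀ with h | h
    · have : (∑' k, if p k ≤ E then (1 : ℝ≥0∞) else 0) = 0 := by
        rw [ENNReal.tsum_eq_zero]
        intro k
        rw [if_neg]
        linarith [hpe k]
      rw [this]
      exact zero_le
    · set f := (F E).toReal with hf
      have hf0 : 0 ≤ f := ENNReal.toReal_nonneg
      have hfE : F E = ENNReal.ofReal f := (ENNReal.ofReal_toReal (hFtop E hE)).symm
      have hin : ∀ j, p j ≤ E → j < ⌊f + K⌋₊ := by
        intro j hj
        have h1 := hFmono (p j) E (hp j) hj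
        rw [hfE, hFp, ENNReal.ofReal_le_ofReal_iff hf0] at h1
        have := (abs_le.1 (hK j)).1
        rw [← Nat.succ_le_iff]
        apply Nat.le_floor
        push_cast
        linarith
      have hN : (∑' k, if p k ≤ E then (1 : ℝ≥0∞) else 0) ≤ (⌊f + K⌋₊ : ℝ≥0∞) := by
        rw [tsum_eq_sum (s := Finset.range ⌊f + K⌋₊)]
        · calc _ ≤ ∑ k ∈ Finset.range ⌊f + K⌋₊, (1 : ℝ≥0∞) := by
                apply Finset.sum_le_sum
                intro k _
                split_ifs <;> simp
            _ = _ := by simp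
        · intro k hk
          rw [if_neg]
          intro hle
          exact hk (Finset.mem_range.2 (hin k hle))
      refine hN.trans ?_
      refine le_trans ?_ (add_le_add_right (ENNReal.ofReal_le_ofReal (hgen E h)) _)
      rw [hfE, ← ENNReal.ofReal_natCast, ← ENNReal.ofReal_add hf0 (by positivity)]
      apply ENNReal.ofReal_le_ofReal
      have := Nat.floor_le (show 0 ≤ f + K by positivity)
      linarith

lemma sin_eq_aux (θ ρ : ℝ) (hθ : 0 < θ) (hθπ : θ < Real.pi) (hρ : 0 < ρ) (hρ1 : ρ < 1)
    (h : Real.sin (θ * ρ) = Real.sin (Real.pi * ρ)) : (θ + Real.pi) * ρ = Real.pi := by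
  have hpi := Real.pi_pos
  have h1 : Real.sin (θ * ρ) - Real.sin (Real.pi * ρ) = 0 := by linarith
  rw [Real.sin_sub_sin] at h1
  have hlt : θ * ρ < Real.pi * ρ := by gcongr
  have hlt2 : Real.pi * ρ < Real.pi := by nlinarith
  have hpos : 0 < θ * ρ := by positivity
  have h2 : Real.sin ((θ * ρ - Real.pi * ρ) / 2) < 0 :=
    Real.sin_neg_of_neg_of_neg_pi_lt (by linarith) (by linarith)
  have h3 : Real.cos ((θ * ρ + Real.pi * ρ) / 2) = 0 := by
    rcases mul_eq_zero.1 h1 with h | h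
    · exfalso; linarith
    · exact h
  have h4 := Real.injOn_cos (x₁ := (θ * ρ + Real.pi * ρ) / 2) (x₂ := Real.pi / 2)
    ⟨by linarith, by linarith⟩ ⟨by linarith, by linarith⟩ (by rw [h3, Real.cos_pi_div_two])
  linarith

theorem stmt_0 (θ : ℝ) (hθ : 0 < θ) (hθπ : θ < Real.pi)
    (Q : ℕ → ℝ) (hQpos : ∀ k, 1 ≤ k → 0 < Q k)
    (hQ : (fun k : ℕ => Q k - (k : ℝ)) =O[atTop] fun _ : ℕ => (1 : ℝ))
    (P : ℕ → ℝ) (hPpos : ∀ k, 1 ≤ k → 0 < P k)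
    (hfix : ∀ j, 1 ≤ j → phi θ P P j = ENNReal.ofReal (Q j))
    (α C : ℝ) (hα : 0 < α) (hC : 1 ≤ C)
    (hbound : ∀ k : ℕ, 1 ≤ k → C⁻¹ * (k : ℝ) ^ α ≤ P k ∧ P k ≤ C * (k : ℝ) ^ α) :
    α = 1 + θ / Real.pi := by
  have hpi := Real.pi_pos
  have hC0 : 0 < C := by linarith
  set p : ℕ → ℝ := fun k => P (k + 1) with hpdef
  have hp : ∀ k, 0 < p k := fun k => hPpos (k + 1) (by omega)
  have hlo : ∀ k : ℕ, C⁻¹ * ((k : ℝ) + 1) ^ α ≤ p k := fun k => by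
    have := (hbound (k + 1) (by omega)).1
    push_cast at this; exact this
  have hhi : ∀ k : ℕ, p k ≤ C * ((k : ℝ) + 1) ^ α := fun k => by
    have := (hbound (k + 1) (by omega)).2
    push_cast at this; exact this
  have hk1 : ∀ k : ℕ, (1 : ℝ) ≤ (k : ℝ) + 1 := fun k => by
    have : (0 : ℝ) ≤ k := Nat.cast_nonneg k
    linarith
  have hk0 : ∀ k : ℕ, (0 : ℝ) < (k : ℝ) + 1 := fun k => by linarith [hk1 k]
  have hfix' : ∀ j, ENNReal.ofReal (1 / Real.pi) * ∑' k, ENNReal.ofReal (Theta θ (p k) (p j)) =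
      ENNReal.ofReal (Q (j + 1)) := fun j => hfix (j + 1) (by omega)
  -- α > 1
  have hα1 : 1 < α := by
    have hfin : ∑' k, ENNReal.ofReal (Theta θ (p k) (p 0)) ≠ ⊤ := by
      intro htop
      have := hfix' 0
      rw [htop, ENNReal.mul_top (by simpa using hpi)] at this
      exact ENNReal.ofReal_ne_top this.symm
    have hnn : ∀ k, 0 ≤ Theta θ (p k) (p 0) := fun k => by
      rw [theta_scale θ _ _ (hp k)]
      exact theta_nonneg θ hθ hθπ _ (div_pos (hp 0) (hp k)).le
    have hsm : Summable fun k => Theta θ (p k) (p 0) := by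
      have := ENNReal.summable_toReal hfin
      refine this.congr fun k => ?_
      exact ENNReal.toReal_ofReal (hnn k)
    have hsin := Real.sin_pos_of_pos_of_lt_pi hθ hθπ
    have hp0 := hp 0
    have hc : 0 < Real.sin θ * p 0 / (C + p 0) := by positivity
    have hs2 : Summable fun k : ℕ => Real.sin θ * p 0 / (C + p 0) * (1 / ((k + 1 : ℕ) : ℝ) ^ α) := by
      refine Summable.of_nonneg_of_le (fun k => by positivity) (fun k => ?_) hsm
      have hk := hp k
      have h1 : (1 : ℝ) ≤ ((k : ℝ) + 1) ^ α := Real.one_le_rpow (hk1 k) hα.le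
      rw [theta_scale θ _ _ hk]
      refine le_trans ?_ (theta_ge θ hθ hθπ _ (by positivity))
      have e1 : Real.sin θ * (p 0 / p k) / (1 + p 0 / p k) = Real.sin θ * p 0 / (p k + p 0) := by
        field_simp
      rw [e1]
      push_cast
      have e2 : Real.sin θ * p 0 / (C + p 0) * (1 / ((k : ℝ) + 1) ^ α) =
        Real.sin θ * p 0 / ((C + p 0) * ((k : ℝ) + 1) ^ α) := by
        rw [div_mul_div_comm, mul_one]
      rw [e2]
      apply div_le_div_of_nonneg_left (by positivity) (by positivity)
      nlinarith [hhi k]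
    rw [summable_mul_left_iff hc.ne'] at hs2
    rw [summable_nat_add_iff (f := fun n : ℕ => 1 / (n : ℝ) ^ α) 1] at hs2
    exact Real.summable_one_div_nat_rpow.1 hs2
  have hpow : ∀ s : ℝ, 0 < s → 1 < α * s → Summable fun k => p k ^ (-s) := by
    intro s hs h
    have h1 : Summable fun k : ℕ => C ^ s * (1 / ((k + 1 : ℕ) : ℝ) ^ (α * s)) := by
      apply Summable.mul_left
      exact (summable_nat_add_iff (f := fun n : ℕ => 1 / (n : ℝ) ^ (α * s)) 1).2
        (Real.summable_one_div_nat_rpow.2 h)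
    refine Summable.of_nonneg_of_le (fun k => Real.rpow_nonneg (hp k).le _) (fun k => ?_) h1
    have h2 := hk0 k
    calc p k ^ (-s) ≤ (C⁻¹ * ((k : ℝ) + 1) ^ α) ^ (-s) :=
          Real.rpow_le_rpow_of_nonpos (by positivity) (hlo k) (by linarith)
      _ = C ^ s * (1 / ((k + 1 : ℕ) : ℝ) ^ (α * s)) := by
        rw [Real.mul_rpow (by positivity) (by positivity), Real.inv_rpow hC0.le,
          Real.rpow_neg hC0.le, inv_inv, ← Real.rpow_mul h2.le, mul_neg, Real.rpow_neg h2.le]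
        push_cast
        rw [one_div]
  obtain ⟨K, hK⟩ := isBigO_one_nat_atTop_iff.1 hQ
  have hsum1 : Summable fun k => (p k)⁻¹ := by
    refine (hpow 1 one_pos (by linarith)).congr fun k => ?_
    rw [Real.rpow_neg_one]
  obtain ⟨B, hB, hb1, hb2⟩ := count_bounds θ hθ hθπ p (fun k => Q (k + 1)) hp hsum1 K
    (fun k => by
      have := hK (k + 1)
      rw [Real.norm_eq_abs] at this
      push_cast at this; exact this)
    (fun k => hQpos _ (by omega)) hfix' C⁻¹ (by positivity) (inv_le_one_of_one_le₀ hC)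
    (fun k => by
      refine le_trans ?_ (hlo k)
      exact le_mul_of_one_le_right (by positivity) (Real.one_le_rpow (hk1 k) hα.le))
  set ρ := 1 / α with hρ
  have hρ0 : 0 < ρ := by positivity
  have hρ1 : ρ < 1 := by rw [hρ, div_lt_one hα]; exact hα1
  have hαρ : α * ρ = 1 := by rw [hρ]; field_simp
  set D := |Real.sin (θ * ρ) - Real.sin (Real.pi * ρ)| with hD
  have hpart : ∀ n : ℕ, D * ∑ k ∈ Finset.range n, p k ^ (-ρ) ≤ B / (1 - ρ) := by
    intro n
    have hev : ∀ᶠ s : ℝ in 𝓝[>] ρ, |Real.sin (θ * s) - Real.sin (Real.pi * s)| *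
        ∑ k ∈ Finset.range n, p k ^ (-s) ≤ B / (1 - s) := by
      filter_upwards [self_mem_nhdsWithin, mem_nhdsWithin_of_mem_nhds (gt_mem_nhds hρ1)]
        with s hs hs1
      have hs : ρ < s := hs
      have hs0 : 0 < s := hρ0.trans hs
      have hsm := hpow s hs0 (by rw [← hαρ]; gcongr)
      refine le_trans ?_ (main_ineq s hs0 hs1 θ hθ hθπ p hp B hB hb1 hb2 hsm)
      gcongr
      exact hsm.sum_le_tsum _ (fun k _ => Real.rpow_nonneg (hp k).le _)
    have hc1 : ContinuousAt (fun s : ℝ => |Real.sin (θ * s) - Real.sin (Real.pi * s)| *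
        ∑ k ∈ Finset.range n, p k ^ (-s)) ρ := by
      apply Continuous.continuousAt
      refine Continuous.mul (by fun_prop) (continuous_finsetSum _ fun k _ => ?_)
      exact continuous_const.rpow continuous_neg (fun _ => Or.inl (hp k).ne')
    have hc2 : ContinuousAt (fun s : ℝ => B / (1 - s)) ρ :=
      ContinuousAt.div (by fun_prop) (by fun_prop) (by linarith)
    exact le_of_tendsto_of_tendsto (hc1.tendsto.mono_left nhdsWithin_le_nhds)
      (hc2.tendsto.mono_left nhdsWithin_le_nhds) hev
  have hD0 : D = 0 := by
    by_contra hne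
    have hDp : 0 < D := lt_of_le_of_ne (abs_nonneg _) (Ne.symm hne)
    have hCρ : 0 < C ^ (-ρ) := Real.rpow_pos_of_pos hC0 _
    have ht := (Real.tendsto_sum_range_one_div_nat_succ_atTop).const_mul_atTop (mul_pos hDp hCρ)
    obtain ⟨n, hn⟩ := (ht.eventually (eventually_gt_atTop (B / (1 - ρ)))).exists
    refine absurd (hpart n) (not_le.2 (lt_of_lt_of_le hn ?_))
    rw [mul_assoc, Finset.mul_sum]
    gcongr with k hk
    have h2 := hk0 k
    calc C ^ (-ρ) * (1 / ((k : ℝ) + 1)) = (C * ((k : ℝ) + 1) ^ α) ^ (-ρ) := by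
          rw [Real.mul_rpow hC0.le (by positivity), ← Real.rpow_mul h2.le, mul_neg, hαρ,
            Real.rpow_neg_one, one_div]
      _ ≤ p k ^ (-ρ) := Real.rpow_le_rpow_of_nonpos (hp k) (hhi k) (by linarith)
  have hsin : Real.sin (θ * ρ) = Real.sin (Real.pi * ρ) := by
    have := abs_eq_zero.1 hD0
    linarith
  have hfin := sin_eq_aux θ ρ hθ hθπ hρ0 hρ1 hsin
  have h5 : θ + Real.pi = Real.pi * α := by
    calc θ + Real.pi = (θ + Real.pi) * (α * ρ) := by rw [hαρ, mul_one]
      _ = (θ + Real.pi) * ρ * α := by ring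
      _ = _ := by rw [hfin]
  field_simp
  linarith
end

section
/- Assume Q_k = k + O(1) and Q_k > (k − 1/2)·θ/π for all k ≥ 1. Then there exists a sequence P = (P_k)_{k≥1} of positive reals with φ_j(P,P) = Q_j for all j ≥ 1 and P_k = k^{α_θ} + O(k^{α_θ − 1}) as k → ∞. -/
open Filter Asymptotics MeasureTheory
open scoped ENNReal Topology

/-- Explicit formula for `Theta`. -/
lemma Theta_eq (θ E' E : ℝ) (h0 : 0 < θ) (h1 : θ < Real.pi) (hE : 0 < E) :
    Theta θ E' E = Real.pi / 2 - Real.arctan ((E' / E + Real.cos θ) / Real.sin θ) := by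
  have hs : 0 < Real.sin θ := Real.sin_pos_of_pos_of_lt_pi h0 h1
  set t := (E' / E + Real.cos θ) / Real.sin θ with ht
  have hq : 0 < √(1 + t ^ 2) := Real.sqrt_pos.mpr (by positivity)
  have hr : 0 < E * Real.sin θ * √(1 + t ^ 2) := by positivity
  have ha := Real.arctan_lt_pi_div_two t
  have hb := Real.neg_pi_div_two_lt_arctan t
  have key := Complex.arg_mul_cos_add_sin_mul_I hr
    (θ := Real.pi / 2 - Real.arctan t) ⟨by linarith, by linarith⟩
  rw [← key, Theta]
  congr 1
  have e1 : E * Real.sin θ * √(1 + t ^ 2) * Real.cos (Real.pi / 2 - Real.arctan t) =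
      E' + E * Real.cos θ := by
    rw [Real.cos_pi_div_two_sub, Real.sin_arctan]
    field_simp
    rw [ht]; field_simp
  have e2 : E * Real.sin θ * √(1 + t ^ 2) * Real.sin (Real.pi / 2 - Real.arctan t) =
      E * Real.sin θ := by
    rw [Real.sin_pi_div_two_sub, Real.cos_arctan]
    field_simp
  rw [Complex.exp_mul_I, ← Complex.ofReal_cos, ← Complex.ofReal_sin,
    ← Complex.ofReal_cos, ← Complex.ofReal_sin]
  rw [mul_add (((E * Real.sin θ * √(1 + t ^ 2) : ℝ)) : ℂ),
    ← mul_assoc (((E * Real.sin θ * √(1 + t ^ 2) : ℝ)) : ℂ), ← Complex.ofReal_mul,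
    ← Complex.ofReal_mul, e1, e2]
  push_cast
  ring

lemma Theta_nonneg (θ E' E : ℝ) (h0 : 0 < θ) (h1 : θ < Real.pi) (hE : 0 < E) :
    0 ≤ Theta θ E' E := by
  rw [Theta_eq θ E' E h0 h1 hE]
  linarith [Real.arctan_lt_pi_div_two ((E' / E + Real.cos θ) / Real.sin θ)]

lemma Theta_mono (θ : ℝ) (h0 : 0 < θ) (h1 : θ < Real.pi) {A A' E E' : ℝ}
    (hE : 0 < E) (hEE : E ≤ E') (hA : 0 < A') (hAA : A' ≤ A) :
    Theta θ A E ≤ Theta θ A' E' := by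
  have hs : 0 < Real.sin θ := Real.sin_pos_of_pos_of_lt_pi h0 h1
  rw [Theta_eq θ A E h0 h1 hE, Theta_eq θ A' E' h0 h1 (hE.trans_le hEE)]
  have : Real.arctan ((A' / E' + Real.cos θ) / Real.sin θ) ≤
      Real.arctan ((A / E + Real.cos θ) / Real.sin θ) := by
    apply Real.arctan_mono
    have hA0 : 0 ≤ A := hA.le.trans hAA
    have : A' / E' ≤ A / E := by gcongr
    gcongr
  linarith

lemma arctan_cot (θ : ℝ) (h0 : 0 < θ) (h1 : θ < Real.pi) :
    Real.arctan (Real.cos θ / Real.sin θ) = Real.pi / 2 - θ := by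
  have : Real.cos θ / Real.sin θ = Real.tan (Real.pi / 2 - θ) := by
    rw [Real.tan_eq_sin_div_cos, Real.sin_pi_div_two_sub, Real.cos_pi_div_two_sub]
  rw [this, Real.arctan_tan (by linarith) (by linarith)]

lemma Theta_le (θ E' E : ℝ) (h0 : 0 < θ) (h1 : θ < Real.pi) (hE : 0 < E) (hE' : 0 ≤ E') :
    Theta θ E' E ≤ θ := by
  have hs : 0 < Real.sin θ := Real.sin_pos_of_pos_of_lt_pi h0 h1
  rw [Theta_eq θ E' E h0 h1 hE]
  have : Real.arctan (Real.cos θ / Real.sin θ) ≤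
      Real.arctan ((E' / E + Real.cos θ) / Real.sin θ) := by
    apply Real.arctan_mono
    have : 0 ≤ E' / E := by positivity
    gcongr
    linarith
  rw [arctan_cot θ h0 h1] at this
  linarith

lemma Theta_smul (θ E' E c : ℝ) (hc : 0 < c) :
    Theta θ (c * E') (c * E) = Theta θ E' E := by
  unfold Theta
  rw [← Complex.arg_real_mul ((E' : ℂ) + (E : ℂ) * Complex.exp (θ * Complex.I)) hc]
  congr 1
  push_cast
  ring

lemma Theta_self (θ E : ℝ) (h0 : 0 < θ) (h1 : θ < Real.pi) (hE : 0 < E) :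
    Theta θ E E = θ / 2 := by
  have hs : 0 < Real.sin θ := Real.sin_pos_of_pos_of_lt_pi h0 h1
  rw [Theta_eq θ E E h0 h1 hE, div_self hE.ne']
  have hs2 : 0 < Real.sin (θ / 2) := Real.sin_pos_of_pos_of_lt_pi (by linarith) (by linarith)
  have hc2 : 0 < Real.cos (θ / 2) := Real.cos_pos_of_mem_Ioo ⟨by linarith, by linarith⟩
  have : (1 + Real.cos θ) / Real.sin θ = Real.cos (θ / 2) / Real.sin (θ / 2) := by
    have e1 : Real.cos θ = 2 * Real.cos (θ / 2) ^ 2 - 1 := by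
      rw [← Real.cos_two_mul]; congr 1; ring
    have e2 : Real.sin θ = 2 * Real.sin (θ / 2) * Real.cos (θ / 2) := by
      rw [← Real.sin_two_mul]; congr 1; ring
    rw [e1, e2]; field_simp; ring
  rw [this, arctan_cot (θ / 2) (by linarith) (by linarith)]
  ring

lemma arctan_le_self' {z : ℝ} (hz : 0 ≤ z) : Real.arctan z ≤ z := by
  rcases lt_or_ge z (Real.pi / 2) with h | h
  · have := Real.le_tan hz h
    calc Real.arctan z ≤ Real.arctan (Real.tan z) := Real.arctan_mono this
      _ = z := Real.arctan_tan (by linarith) h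
  · linarith [Real.arctan_lt_pi_div_two z]

lemma Theta_decay_one (θ x : ℝ) (h0 : 0 < θ) (h1 : θ < Real.pi) (hx : 0 ≤ x) :
    Theta θ x 1 ≤ 3 * Real.pi / (1 + x) := by
  have hs : 0 < Real.sin θ := Real.sin_pos_of_pos_of_lt_pi h0 h1
  have hpi := Real.pi_gt_three
  rcases le_or_gt x 2 with h | h
  · have := Theta_le θ x 1 h0 h1 one_pos hx
    rw [le_div_iff₀ (by linarith)]
    nlinarith
  · rw [Theta_eq θ x 1 h0 h1 one_pos, div_one]
    have hc := Real.neg_one_le_cos θ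
    have hy : 0 < (x + Real.cos θ) / Real.sin θ := div_pos (by linarith) hs
    rw [← Real.arctan_inv_of_pos hy]
    refine (arctan_le_self' (by positivity)).trans ?_
    rw [inv_div, div_le_div_iff₀ (by linarith) (by linarith)]
    nlinarith [Real.sin_le_one θ]

lemma Theta_decay (θ E' E : ℝ) (h0 : 0 < θ) (h1 : θ < Real.pi) (hE : 0 < E) (hE' : 0 < E') :
    Theta θ E' E ≤ 3 * Real.pi * (E / E') := by
  have h : Theta θ E' E = Theta θ (E' / E) 1 := by
    rw [← Theta_smul θ (E' / E) 1 E hE, mul_one, mul_div_cancel₀ _ hE.ne']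
  rw [h]
  refine (Theta_decay_one θ _ h0 h1 (by positivity)).trans ?_
  have hx : 0 < E' / E := by positivity
  rw [← inv_div E' E, ← div_eq_mul_inv]
  have := Real.pi_pos
  gcongr
  linarith

lemma Theta_continuousOn (θ E' : ℝ) (h0 : 0 < θ) (h1 : θ < Real.pi) :
    ContinuousOn (fun E => Theta θ E' E) (Set.Ioi 0) := by
  have : ContinuousOn (fun E => Real.pi / 2 -
      Real.arctan ((E' / E + Real.cos θ) / Real.sin θ)) (Set.Ioi 0) := by
    apply continuousOn_const.sub
    apply Real.continuous_arctan.comp_continuousOn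
    apply ContinuousOn.div_const
    apply ContinuousOn.add _ continuousOn_const
    exact continuousOn_const.div continuousOn_id (fun x hx => (ne_of_gt hx))
  exact this.congr (fun E hE => Theta_eq θ E' E h0 h1 hE)

lemma exists_fixed (θ : ℝ) (h0 : 0 < θ) (h1 : θ < Real.pi) (lo hi q : ℕ → ℝ)
    (hlo0 : ∀ k, 0 < lo k) (hlh : ∀ k, lo k ≤ hi k)
    (hsum : Summable fun k => 1 / lo k)
    (hlo : ∀ j, ∑' k, Theta θ (lo k) (lo j) ≤ q j)
    (hhi : ∀ j, q j ≤ ∑' k, Theta θ (hi k) (hi j)) :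
    ∃ p : ℕ → ℝ, (∀ k, lo k ≤ p k) ∧ (∀ k, p k ≤ hi k) ∧
      ∀ j, (Summable fun k => Theta θ (p k) (p j)) ∧ ∑' k, Theta θ (p k) (p j) = q j := by
  have hpi := Real.pi_pos
  have hS : ∀ x : ℕ → ℝ, (∀ k, lo k ≤ x k) → ∀ y, 0 < y →
      Summable fun k => Theta θ (x k) y := by
    intro x hx y hy
    refine Summable.of_nonneg_of_le (fun k => Theta_nonneg θ _ _ h0 h1 hy) (fun k => ?_)
      (hsum.mul_left (3 * Real.pi * y))
    refine (Theta_decay θ _ _ h0 h1 hy ((hlo0 k).trans_le (hx k))).trans ?_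
    have := hx k
    have := hlo0 k
    have h3 : y / x k ≤ y / lo k := by gcongr
    calc 3 * Real.pi * (y / x k) ≤ 3 * Real.pi * (y / lo k) := by gcongr
      _ = 3 * Real.pi * y * (1 / lo k) := by ring
  have hC : ∀ x : ℕ → ℝ, (∀ k, lo k ≤ x k) → 
      ContinuousOn (fun y => ∑' k, Theta θ (x k) y) (Set.Ioi 0) := by
    intro x hx
    have hloc : ∀ Y : ℝ, 0 < Y → ContinuousOn (fun y => ∑' k, Theta θ (x k) y) (Set.Ioo 0 Y) := by
      intro Y hY
      refine continuousOn_tsum (u := fun k => Theta θ (x k) Y) (fun k => ?_) (hS x hx Y hY) ?_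
      · exact (Theta_continuousOn θ (x k) h0 h1).mono (fun y hy => hy.1)
      · intro k y hy
        rw [Real.norm_of_nonneg (Theta_nonneg θ _ _ h0 h1 hy.1)]
        exact Theta_mono θ h0 h1 hy.1 hy.2.le ((hlo0 k).trans_le (hx k)) le_rfl
    intro y hy
    have hy' : 0 < y := hy
    have := hloc (y + 1) (by linarith) 
    exact (this.continuousAt (Ioo_mem_nhds hy' (by linarith))).continuousWithinAt
  have hM : ∀ x x' : ℕ → ℝ, (∀ k, lo k ≤ x k) → (∀ k, x k ≤ x' k) → ∀ y y', 0 < y → y ≤ y' →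
      ∑' k, Theta θ (x' k) y ≤ ∑' k, Theta θ (x k) y' := by
    intro x x' hx hxx y y' hy hyy
    refine Summable.tsum_le_tsum (fun k => ?_) (hS x' (fun k => (hx k).trans (hxx k)) y hy)
      (hS x hx y' (hy.trans_le hyy))
    exact Theta_mono θ h0 h1 hy hyy ((hlo0 k).trans_le (hx k)) (hxx k)
  -- the set of subsolutions
  set S : Set (ℕ → ℝ) := {x | (∀ k, lo k ≤ x k) ∧ (∀ k, x k ≤ hi k) ∧
    ∀ j, ∑' k, Theta θ (x k) (x j) ≤ q j} with hSdef
  have hloS : lo ∈ S := ⟨fun _ => le_rfl, hlh, hlo⟩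
  set p : ℕ → ℝ := fun j => sSup ((fun x : ℕ → ℝ => x j) '' S) with hp
  have hbdd : ∀ j, BddAbove ((fun x : ℕ → ℝ => x j) '' S) := by
    intro j
    refine ⟨hi j, ?_⟩
    rintro _ ⟨x, hx, rfl⟩
    exact hx.2.1 j
  have hle : ∀ x ∈ S, ∀ j, x j ≤ p j := fun x hx j => le_csSup (hbdd j) ⟨x, hx, rfl⟩
  have hplo : ∀ k, lo k ≤ p k := hle lo hloS
  have hp0 : ∀ k, 0 < p k := fun k => (hlo0 k).trans_le (hplo k)
  have hphi : ∀ k, p k ≤ hi k := by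
    intro k
    refine csSup_le ⟨_, ⟨lo, hloS, rfl⟩⟩ ?_
    rintro _ ⟨x, hx, rfl⟩
    exact hx.2.1 k
  have hpq : ∀ j, ∑' k, Theta θ (p k) (p j) ≤ q j := by
    intro j
    by_contra! hcon
    have hcont := (hC p hplo).continuousAt (Ioi_mem_nhds (hp0 j))
    have hev := hcont.eventually (lt_mem_nhds hcon)
    obtain ⟨ε, hε, hball⟩ := Metric.eventually_nhds_iff.mp hev
    obtain ⟨_, ⟨x, hx, rfl⟩, hlt⟩ := exists_lt_of_lt_csSup
      (⟨_, ⟨lo, hloS, rfl⟩⟩ : ((fun x : ℕ → ℝ => x j) '' S).Nonempty)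
      (show p j - ε < sSup ((fun x : ℕ → ℝ => x j) '' S) by
        change p j - ε < p j; linarith)
    have hxj := hle x hx j
    have hd := @hball (x j) (by
      rw [Real.dist_eq, abs_lt]
      dsimp only at hlt
      constructor <;> linarith)
    have h2 := hM x p hx.1 (hle x hx) (x j) (x j) ((hlo0 j).trans_le (hx.1 j)) le_rfl
    have h3 := hx.2.2 j
    linarith
  refine ⟨p, hplo, hphi, fun j => ⟨hS p hplo _ (hp0 j), ?_⟩⟩
  by_contra hne
  have hlt : ∑' k, Theta θ (p k) (p j) < q j := lt_of_le_of_ne (hpq j) hne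
  have hpj : p j < hi j := by
    refine lt_of_le_of_ne (hphi j) (fun h => ?_)
    have h2 := hM p hi hplo hphi (p j) (p j) (hp0 j) le_rfl
    have h3 := hhi j
    rw [← h] at h3
    linarith
  have hcont := (hC p hplo).continuousAt (Ioi_mem_nhds (hp0 j))
  have hev := hcont.eventually (gt_mem_nhds hlt)
  obtain ⟨ε, hε, hball⟩ := Metric.eventually_nhds_iff.mp hev
  set y := p j + min (ε / 2) (hi j - p j) with hy
  have hm : 0 < min (ε / 2) (hi j - p j) := lt_min (by linarith) (by linarith)
  have hm1 := min_le_left (ε / 2) (hi j - p j)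
  have hm2 := min_le_right (ε / 2) (hi j - p j)
  have hyq := @hball y (by
    rw [Real.dist_eq, abs_lt]; constructor <;> linarith)
  have hpx : ∀ k, p k ≤ Function.update p j y k := by
    intro k
    rcases eq_or_ne k j with rfl | hk
    · simp; linarith
    · simp [hk]
  have hnew : Function.update p j y ∈ S := by
    refine ⟨fun k => (hplo k).trans (hpx k), fun k => ?_, fun i => ?_⟩
    · rcases eq_or_ne k j with rfl | hk
      · simp; linarith
      · simpa [hk] using hphi k
    · rcases eq_or_ne i j with rfl | hk
      · rw [Function.update_self]
        exact (hM p _ hplo hpx y y (by linarith [hp0 i]) le_rfl).trans hyq.le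
      · rw [Function.update_of_ne hk]
        exact (hM p _ hplo hpx (p i) (p i) (hp0 i) le_rfl).trans (hpq i)
  have := hle _ hnew j
  rw [Function.update_self] at this
  linarith

lemma norm_lower (x t b : ℝ) (hx : 0 ≤ x) (hb : b < Real.pi) (ht : |t| ≤ b) :
    Real.cos (b / 2) * (1 + x) ≤ ‖(x : ℂ) + Complex.exp (t * Complex.I)‖ := by
  have hb0 : 0 ≤ b := (abs_nonneg t).trans ht
  have hc : 0 < Real.cos (b / 2) := Real.cos_pos_of_mem_Ioo ⟨by linarith, by linarith⟩
  have hc2 : Real.cos (b / 2) ≤ Real.cos (t / 2) := by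
    rw [← Real.cos_abs (t / 2), abs_div, abs_two]
    apply Real.cos_le_cos_of_nonneg_of_le_pi (by positivity) (by linarith) (by linarith)
  have hct : Real.cos t = 2 * Real.cos (t / 2) ^ 2 - 1 := by
    rw [← Real.cos_two_mul]; congr 1; ring
  apply le_of_sq_le_sq _ (norm_nonneg _)
  rw [← Complex.normSq_eq_norm_sq, Complex.normSq_apply, Complex.exp_mul_I]
  simp only [Complex.add_re, Complex.ofReal_re, Complex.cos_ofReal_re, Complex.mul_re,
    Complex.sin_ofReal_re, Complex.I_re, Complex.sin_ofReal_im, Complex.I_im, Complex.add_im,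
    Complex.ofReal_im, Complex.cos_ofReal_im, Complex.mul_im]
  have h1 : Real.cos (b / 2) ^ 2 ≤ Real.cos (t / 2) ^ 2 := by gcongr
  have h2 : Real.cos (t / 2) ^ 2 ≤ 1 := Real.cos_sq_le_one _
  have h3 := Real.sin_sq_add_cos_sq t
  have e : (x + (Real.cos t + (Real.sin t * 0 - 0 * 1))) * (x + (Real.cos t + (Real.sin t * 0 - 0 * 1)))
     + (0 + (0 + (Real.sin t * 1 + 0 * 0))) * (0 + (0 + (Real.sin t * 1 + 0 * 0))) =
     x ^ 2 + 2 * x * Real.cos t + 1 := by nlinarith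
  rw [e, hct]
  have h4 : (Real.cos (b / 2) * (1 + x)) ^ 2 ≤ Real.cos (t / 2) ^ 2 * (1 + x) ^ 2 := by
    rw [mul_pow]; gcongr
  nlinarith [mul_nonneg (sub_nonneg.2 h2) (sq_nonneg (1 - x))]

lemma mem_slit (x t : ℝ) (hx : 0 ≤ x) (ht : |t| < Real.pi) :
    (x : ℂ) + Complex.exp (t * Complex.I) ∈ Complex.slitPlane := by
  rw [Complex.mem_slitPlane_iff, Complex.exp_mul_I]
  simp only [Complex.add_re, Complex.ofReal_re, Complex.cos_ofReal_re, Complex.mul_re,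
    Complex.sin_ofReal_re, Complex.I_re, Complex.sin_ofReal_im, Complex.I_im, Complex.add_im,
    Complex.ofReal_im, Complex.cos_ofReal_im, Complex.mul_im]
  rw [abs_lt] at ht
  by_cases h : t = 0
  · left; simp [h]; linarith
  · right
    have : Real.sin t ≠ 0 := by
      intro h2
      rcases lt_or_gt_of_ne h with h3 | h3
      · have := Real.sin_neg_of_neg_of_neg_pi_lt h3 ht.1
        linarith
      · have := Real.sin_pos_of_pos_of_lt_pi h3 ht.2
        linarith
    simpa using this

lemma int_bound (α : ℝ) (hα : 1 < α) :
    IntegrableOn (fun s : ℝ => 1 / (1 + s ^ α)) (Set.Ioi 0) := by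
  have hcont : ContinuousOn (fun s : ℝ => 1 / (1 + s ^ α)) (Set.Ici 0) := by
    apply ContinuousOn.div continuousOn_const
    · exact continuousOn_const.add (continuousOn_id.rpow_const (fun x _ => Or.inr (by linarith)))
    · intro x hx
      have : 0 ≤ x ^ α := Real.rpow_nonneg hx _
      positivity
  rw [← Set.Ioc_union_Ioi_eq_Ioi zero_le_one]
  apply IntegrableOn.union
  · refine IntegrableOn.mono_set ?_ Set.Ioc_subset_Icc_self
    exact (hcont.mono Set.Icc_subset_Ici_self).integrableOn_Icc
  · refine Integrable.mono' (integrableOn_Ioi_rpow_of_lt (a := -α) (by linarith) one_pos) ?_ ?_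
    · exact (hcont.mono (fun x hx => by
        have : (1:ℝ) < x := hx
        exact (zero_lt_one.trans this).le)).aestronglyMeasurable measurableSet_Ioi
    · refine (ae_restrict_iff' measurableSet_Ioi).2 (ae_of_all _ fun x hx => ?_)
      have hx0 : (0:ℝ) < x := zero_lt_one.trans hx
      have : 0 < x ^ α := Real.rpow_pos_of_pos hx0 _
      rw [Real.norm_of_nonneg (by positivity), Real.rpow_neg hx0.le, ← one_div]
      gcongr
      linarith

lemma cont_base (α t : ℝ) (hα : 1 < α) :
    Continuous (fun s : ℝ => ((s ^ α : ℝ) : ℂ) + Complex.exp (t * Complex.I)) := by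
  refine (Complex.continuous_ofReal.comp ?_).add continuous_const
  exact Real.continuous_rpow_const (by linarith)

/-- Kernel integral. -/
noncomputable def kap (α t : ℝ) : ℂ :=
  ∫ s in Set.Ioi (0 : ℝ), Complex.exp (t * Complex.I) / (((s ^ α : ℝ) : ℂ) + Complex.exp (t * Complex.I))

lemma cont_kint (α t : ℝ) (hα : 1 < α) (ht : |t| < Real.pi) :
    ContinuousOn (fun s : ℝ => Complex.exp (t * Complex.I) /
      (((s ^ α : ℝ) : ℂ) + Complex.exp (t * Complex.I))) (Set.Ioi 0) := by
  apply continuousOn_const.div (cont_base α t hα).continuousOn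
  intro s hs
  exact Complex.slitPlane_ne_zero (mem_slit _ _ (Real.rpow_nonneg (le_of_lt hs) _) ht)

lemma kint_bound (α t b s : ℝ) (hs : 0 < s) (hb : b < Real.pi) (ht : |t| ≤ b) :
    ‖Complex.exp (t * Complex.I) / (((s ^ α : ℝ) : ℂ) + Complex.exp (t * Complex.I))‖ ≤
      (1 / Real.cos (b / 2)) * (1 / (1 + s ^ α)) := by
  have hb0 : 0 ≤ b := (abs_nonneg t).trans ht
  have hc : 0 < Real.cos (b / 2) := Real.cos_pos_of_mem_Ioo ⟨by linarith, by linarith⟩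
  have hx : 0 < s ^ α := Real.rpow_pos_of_pos hs _
  rw [norm_div, Complex.norm_exp_ofReal_mul_I, div_mul_div_comm, one_mul]
  have := norm_lower (s ^ α) t b hx.le hb ht
  gcongr

lemma kint_integrable (α t : ℝ) (hα : 1 < α) (ht : |t| < Real.pi) :
    IntegrableOn (fun s : ℝ => Complex.exp (t * Complex.I) /
      (((s ^ α : ℝ) : ℂ) + Complex.exp (t * Complex.I))) (Set.Ioi 0) := by
  refine Integrable.mono' ((int_bound α hα).const_mul (1 / Real.cos (|t| / 2)))
    ((cont_kint α t hα ht).aestronglyMeasurable measurableSet_Ioi) ?_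
  refine (ae_restrict_iff' measurableSet_Ioi).2 (ae_of_all _ fun x hx => ?_)
  exact kint_bound α t |t| x hx ht le_rfl

/-- derivative kernel bound -/
lemma kint2_bound (α t b s : ℝ) (hs : 0 < s) (hb : b < Real.pi) (ht : |t| ≤ b) :
    ‖Complex.I * (((s ^ α : ℝ) : ℂ) * Complex.exp (t * Complex.I)) /
      (((s ^ α : ℝ) : ℂ) + Complex.exp (t * Complex.I)) ^ 2‖ ≤
      (1 / Real.cos (b / 2)) ^ 2 * (1 / (1 + s ^ α)) := by
  have hb0 : 0 ≤ b := (abs_nonneg t).trans ht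
  have hc : 0 < Real.cos (b / 2) := Real.cos_pos_of_mem_Ioo ⟨by linarith, by linarith⟩
  have hx : 0 < s ^ α := Real.rpow_pos_of_pos hs _
  rw [norm_div, norm_mul, norm_mul, norm_pow, Complex.norm_exp_ofReal_mul_I, Complex.norm_I,
    Complex.norm_of_nonneg hx.le]
  have := norm_lower (s ^ α) t b hx.le hb ht
  calc 1 * (s ^ α * 1) / ‖((s ^ α : ℝ) : ℂ) + Complex.exp (t * Complex.I)‖ ^ 2
      ≤ (1 + s ^ α) / (Real.cos (b / 2) * (1 + s ^ α)) ^ 2 := by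
        gcongr
        linarith
    _ = _ := by field_simp

lemma kint2_meas (α t : ℝ) (hα : 1 < α) (ht : |t| < Real.pi) :
    AEStronglyMeasurable (fun s : ℝ => Complex.I * (((s ^ α : ℝ) : ℂ) * Complex.exp (t * Complex.I)) /
      (((s ^ α : ℝ) : ℂ) + Complex.exp (t * Complex.I)) ^ 2) (volume.restrict (Set.Ioi 0)) := by
  apply ContinuousOn.aestronglyMeasurable _ measurableSet_Ioi
  apply ContinuousOn.div
  · refine continuousOn_const.mul (ContinuousOn.mul ?_ continuousOn_const)
    exact (Complex.continuous_ofReal.comp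
      (Real.continuous_rpow_const (by linarith))).continuousOn
  · exact ((cont_base α t hα).pow 2).continuousOn
  · intro s hs
    exact pow_ne_zero _
      (Complex.slitPlane_ne_zero (mem_slit _ _ (Real.rpow_nonneg (le_of_lt hs) _) ht))

lemma hasDerivAt_expI (t : ℝ) : HasDerivAt (fun t : ℝ => Complex.exp (t * Complex.I))
    (Complex.exp (t * Complex.I) * Complex.I) t := by
  have h : HasDerivAt (fun t : ℝ => (t : ℂ) * Complex.I) (1 * Complex.I) t :=
    (HasDerivAt.ofReal_comp (hasDerivAt_id t)).mul_const Complex.I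
  simpa using h.cexp

lemma abs_nhds (t : ℝ) (ht : |t| < Real.pi) :
    ∃ b, b < Real.pi ∧ |t| ≤ b ∧ {x : ℝ | |x| ≤ b} ∈ 𝓝 t := by
  refine ⟨(|t| + Real.pi) / 2, by linarith, by linarith, ?_⟩
  have : ∀ᶠ x in 𝓝 t, |x| < (|t| + Real.pi) / 2 :=
    continuous_abs.continuousAt.eventually (gt_mem_nhds (by linarith))
  exact this.mono (fun x hx => le_of_lt hx)

lemma kap_deriv_aux (α t : ℝ) (hα : 1 < α) (ht : |t| < Real.pi) :
    IntegrableOn (fun s : ℝ => Complex.I * (((s ^ α : ℝ) : ℂ) * Complex.exp (t * Complex.I)) /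
      (((s ^ α : ℝ) : ℂ) + Complex.exp (t * Complex.I)) ^ 2) (Set.Ioi 0) ∧
    HasDerivAt (kap α) (∫ s in Set.Ioi (0:ℝ), Complex.I * (((s ^ α : ℝ) : ℂ) * Complex.exp (t * Complex.I)) /
      (((s ^ α : ℝ) : ℂ) + Complex.exp (t * Complex.I)) ^ 2) t := by
  obtain ⟨b, hb, htb, hnhds⟩ := abs_nhds t ht
  refine hasDerivAt_integral_of_dominated_loc_of_deriv_le (𝕜 := ℝ)
    (F := fun t s => Complex.exp (t * Complex.I) / (((s ^ α : ℝ) : ℂ) + Complex.exp (t * Complex.I)))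
    (F' := fun t s => Complex.I * (((s ^ α : ℝ) : ℂ) * Complex.exp (t * Complex.I)) /
      (((s ^ α : ℝ) : ℂ) + Complex.exp (t * Complex.I)) ^ 2)
    (bound := fun s => (1 / Real.cos (b / 2)) ^ 2 * (1 / (1 + s ^ α)))
    hnhds ?_ (kint_integrable α t hα ht) (kint2_meas α t hα ht) ?_
    ((int_bound α hα).const_mul _) ?_
  · filter_upwards [hnhds] with x hx
    exact (cont_kint α x hα (lt_of_le_of_lt hx hb)).aestronglyMeasurable measurableSet_Ioi
  · refine (ae_restrict_iff' measurableSet_Ioi).2 (ae_of_all _ fun s hs x hx => ?_)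
    exact kint2_bound α x b s hs hb hx
  · refine (ae_restrict_iff' measurableSet_Ioi).2 (ae_of_all _ fun s hs x hx => ?_)
    have hne := Complex.slitPlane_ne_zero
      (mem_slit (s ^ α) x (Real.rpow_nonneg (le_of_lt hs) _) (lt_of_le_of_lt hx hb))
    have h := (hasDerivAt_expI x).div ((hasDerivAt_expI x).const_add ((s ^ α : ℝ) : ℂ)) hne
    refine HasDerivAt.congr_deriv (f := fun x : ℝ => Complex.exp (x * Complex.I) /
      (((s ^ α : ℝ) : ℂ) + Complex.exp (x * Complex.I))) h ?_
    congr 1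
    ring

lemma ibp (α t : ℝ) (hα : 1 < α) (ht : |t| < Real.pi) :
    (∫ s in Set.Ioi (0:ℝ), Complex.I * (((s ^ α : ℝ) : ℂ) * Complex.exp (t * Complex.I)) /
      (((s ^ α : ℝ) : ℂ) + Complex.exp (t * Complex.I)) ^ 2) = Complex.I / α * kap α t := by
  have hI1 := kint_integrable α t hα ht
  have hI2 := (kap_deriv_aux α t hα ht).1
  set w := Complex.exp (t * Complex.I) with hw
  have hne : ∀ s : ℝ, 0 ≤ s → ((s ^ α : ℝ) : ℂ) + w ≠ 0 := fun s hs =>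
    Complex.slitPlane_ne_zero (mem_slit (s ^ α) t (Real.rpow_nonneg hs _) ht)
  have h := integral_Ioi_of_hasDerivAt_of_tendsto (a := 0) (m := 0)
    (f := fun s : ℝ => (s : ℂ) * (w / (((s ^ α : ℝ) : ℂ) + w)))
    (f' := fun s : ℝ => w / (((s ^ α : ℝ) : ℂ) + w) -
      (α / Complex.I) * (Complex.I * (((s ^ α : ℝ) : ℂ) * w) / (((s ^ α : ℝ) : ℂ) + w) ^ 2))
    ?_ ?_ (hI1.sub (hI2.const_mul _)) ?_
  · rw [integral_sub hI1 (hI2.const_mul _), integral_const_mul] at h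
    have hα0 : (α : ℂ) ≠ 0 := by exact_mod_cast (by linarith : α ≠ 0)
    simp only [Complex.ofReal_zero, zero_mul, sub_zero] at h
    rw [kap, ← hw]
    field_simp at h ⊢
    linear_combination (-1 : ℂ) * h
  · apply ContinuousAt.continuousWithinAt
    apply (Complex.continuous_ofReal.continuousAt).mul
    exact continuousAt_const.div (cont_base α t hα).continuousAt (hne 0 le_rfl)
  · intro s hs
    have hs0 : (0:ℝ) < s := hs
    have h1 : HasDerivAt (fun s : ℝ => ((s ^ α : ℝ) : ℂ) + w) ((α * s ^ (α - 1) : ℝ) : ℂ) s :=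
      ((Real.hasDerivAt_rpow_const (Or.inl hs0.ne')).ofReal_comp).add_const w
    have h2 : HasDerivAt (fun s : ℝ => (s : ℂ)) 1 s := HasDerivAt.ofReal_comp (hasDerivAt_id s)
    have h3 := h2.mul ((hasDerivAt_const s w).div h1 (hne s hs0.le))
    have e : ((s ^ α : ℝ) : ℂ) = s * ((s ^ (α - 1) : ℝ) : ℂ) := by
      rw [← Complex.ofReal_mul]; congr 1
      rw [Real.rpow_sub_one hs0.ne']; field_simp
    have := hne s hs0.le
    have hII := Complex.I_ne_zero
    refine HasDerivAt.congr_deriv (f := fun s : ℝ => (s : ℂ) * (w / (((s ^ α : ℝ) : ℂ) + w))) h3 ?_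
    simp only [Pi.div_apply]
    push_cast
    field_simp
    simp only [e]
    ring
  · rw [tendsto_zero_iff_norm_tendsto_zero]
    have hlim : Tendsto (fun s : ℝ => (1 / Real.cos (|t| / 2)) * s ^ (-(α - 1))) atTop (𝓝 0) := by
      simpa using (tendsto_rpow_neg_atTop (by linarith : 0 < α - 1)).const_mul
        (1 / Real.cos (|t| / 2))
    refine squeeze_zero' (Eventually.of_forall fun _ => norm_nonneg _) ?_ hlim
    filter_upwards [eventually_gt_atTop 0] with s hs
    have hc : 0 < Real.cos (|t| / 2) := Real.cos_pos_of_mem_Ioo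
      ⟨by linarith [abs_nonneg t, Real.pi_pos], by linarith⟩
    have hb := kint_bound α t |t| s hs ht le_rfl
    have hx : 0 < s ^ α := Real.rpow_pos_of_pos hs _
    rw [norm_mul, Complex.norm_of_nonneg hs.le]
    calc s * _ ≤ s * ((1 / Real.cos (|t| / 2)) * (1 / (1 + s ^ α))) := by gcongr
      _ ≤ s * ((1 / Real.cos (|t| / 2)) * (1 / (s ^ α))) := by
        gcongr
        linarith
      _ = _ := by
        rw [neg_sub, Real.rpow_sub hs, Real.rpow_one]; ring

lemma kap_hasDeriv (α t : ℝ) (hα : 1 < α) (ht : |t| < Real.pi) :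
    HasDerivAt (kap α) (Complex.I / α * kap α t) t := by
  rw [← ibp α t hα ht]
  exact (kap_deriv_aux α t hα ht).2

lemma kap_eq (α t : ℝ) (hα : 1 < α) (ht : |t| < Real.pi) :
    kap α t = kap α 0 * Complex.exp ((t / α : ℝ) * Complex.I) := by
  have hα0 : (α : ℂ) ≠ 0 := by exact_mod_cast (by linarith : α ≠ 0)
  have hd : ∀ x ∈ Set.Ioo (-Real.pi) Real.pi,
      HasDerivAt (fun x : ℝ => kap α x * Complex.exp (((-x / α : ℝ) : ℂ) * Complex.I)) 0 x := by
    intro x hx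
    have h1 := kap_hasDeriv α x hα (abs_lt.2 hx)
    have h2 : HasDerivAt (fun x : ℝ => (((-x / α : ℝ) : ℂ) * Complex.I))
        (((-1 / α : ℝ) : ℂ) * Complex.I) x :=
      (((hasDerivAt_id x).neg.div_const α).ofReal_comp).mul_const Complex.I
    refine HasDerivAt.congr_deriv (f := fun x : ℝ => kap α x *
      Complex.exp (((-x / α : ℝ) : ℂ) * Complex.I)) (h1.mul h2.cexp) ?_
    push_cast
    field_simp
    ring
  have hc := isOpen_Ioo.is_const_of_deriv_eq_zero (isPreconnected_Ioo)
    (fun x hx => (hd x hx).differentiableAt.differentiableWithinAt)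
    (fun x hx => (hd x hx).deriv) (abs_lt.1 ht)
    (show (0:ℝ) ∈ Set.Ioo (-Real.pi) Real.pi from ⟨by linarith [Real.pi_pos], Real.pi_pos⟩)
  simp only [neg_zero, zero_div, Complex.ofReal_zero, zero_mul, Complex.exp_zero, mul_one] at hc
  rw [← hc, mul_assoc, ← Complex.exp_add]
  have : ((-t / α : ℝ) : ℂ) * Complex.I + ((t / α : ℝ) : ℂ) * Complex.I = 0 := by
    push_cast; ring
  rw [this, Complex.exp_zero, mul_one]

lemma kap_zero (α : ℝ) : kap α 0 =
    ((∫ s in Set.Ioi (0 : ℝ), 1 / (s ^ α + 1) : ℝ) : ℂ) := by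
  rw [kap, ← integral_complex_ofReal]
  simp

lemma Theta_hasDeriv (x t : ℝ) (hx : 0 ≤ x) (ht : |t| < Real.pi) :
    HasDerivAt (fun t => Theta t x 1)
      (Complex.exp (t * Complex.I) / ((x : ℂ) + Complex.exp (t * Complex.I))).re t := by
  have h1 := ((hasDerivAt_expI t).const_add (x : ℂ)).clog_real (mem_slit x t hx ht)
  have h2 := Complex.imCLM.hasFDerivAt.comp_hasDerivAt t h1
  have e : (fun t => Theta t x 1) =
      (fun t : ℝ => Complex.imCLM (Complex.log ((x : ℂ) + Complex.exp (t * Complex.I)))) := by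
    funext t; simp [Theta, Complex.log_im]
  rw [e]
  refine HasDerivAt.congr_deriv (f := fun t : ℝ =>
    Complex.imCLM (Complex.log ((x : ℂ) + Complex.exp (t * Complex.I)))) h2 ?_
  rw [mul_div_right_comm]
  simp

lemma Theta_meas (α t : ℝ) : Measurable (fun s : ℝ => Theta t (s ^ α) 1) := by
  unfold Theta
  apply Complex.measurable_arg.comp
  fun_prop

lemma Theta_zero (x : ℝ) (hx : 0 ≤ x) : Theta 0 x 1 = 0 := by
  have : (x : ℂ) + ((1 : ℝ) : ℂ) * Complex.exp (((0 : ℝ) : ℂ) * Complex.I) = ((x + 1 : ℝ) : ℂ) := by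
    simp
  rw [Theta, this, Complex.arg_ofReal_of_nonneg (by linarith)]

lemma Theta_int (α t : ℝ) (hα : 1 < α) (ht : |t| < Real.pi) :
    IntegrableOn (fun s : ℝ => Theta t (s ^ α) 1) (Set.Ioi 0) := by
  refine Integrable.mono' ((int_bound α hα).const_mul ((1 / Real.cos (|t| / 2)) * |t|))
    (Theta_meas α t).aestronglyMeasurable ?_
  refine (ae_restrict_iff' measurableSet_Ioi).2 (ae_of_all _ fun s hs => ?_)
  have hx : 0 ≤ s ^ α := Real.rpow_nonneg (le_of_lt hs) _
  have := (convex_Icc (-|t|) |t|).norm_image_sub_le_of_norm_hasDerivWithin_le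
    (f := fun t => Theta t (s ^ α) 1) (C := (1 / Real.cos (|t| / 2)) * (1 / (1 + s ^ α)))
    (fun y hy => (Theta_hasDeriv (s ^ α) y hx
      (lt_of_le_of_lt (abs_le.2 hy) ht)).hasDerivWithinAt)
    (fun y hy => (Complex.abs_re_le_norm _).trans (kint_bound α y |t| s hs ht (abs_le.2 hy)))
    (show (0:ℝ) ∈ _ from ⟨by linarith [abs_nonneg t], abs_nonneg t⟩)
    (show t ∈ _ from abs_le.1 le_rfl)
  rw [Theta_zero _ hx, sub_zero, sub_zero] at this
  rw [Real.norm_eq_abs t] at this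
  linarith

lemma u_hasDeriv (α t : ℝ) (hα : 1 < α) (ht : |t| < Real.pi) :
    HasDerivAt (fun t => ∫ s in Set.Ioi (0:ℝ), Theta t (s ^ α) 1) (kap α t).re t := by
  obtain ⟨b, hb, htb, hnhds⟩ := abs_nhds t ht
  have hre : (kap α t).re = ∫ s in Set.Ioi (0 : ℝ), (Complex.exp (t * Complex.I) /
      (((s ^ α : ℝ) : ℂ) + Complex.exp (t * Complex.I))).re := by
    have := integral_re (𝕜 := ℂ) (kint_integrable α t hα ht)
    simp only [RCLike.re_eq_complex_re] at this
    exact this.symm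
  rw [hre]
  refine (hasDerivAt_integral_of_dominated_loc_of_deriv_le (𝕜 := ℝ)
    (μ := volume.restrict (Set.Ioi (0:ℝ)))
    (F := fun t s => Theta t (s ^ α) 1)
    (F' := fun t s => (Complex.exp (t * Complex.I) /
      (((s ^ α : ℝ) : ℂ) + Complex.exp (t * Complex.I))).re)
    (bound := fun s => (1 / Real.cos (b / 2)) * (1 / (1 + s ^ α)))
    hnhds ?_ (Theta_int α t hα ht) ?_ ?_
    ((int_bound α hα).const_mul _) ?_).2
  · exact Eventually.of_forall fun x => (Theta_meas α x).aestronglyMeasurable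
  · exact (kint_integrable α t hα ht).re.aestronglyMeasurable
  · refine (ae_restrict_iff' measurableSet_Ioi).2 (ae_of_all _ fun s hs x hx => ?_)
    exact (Complex.abs_re_le_norm _).trans (kint_bound α x b s hs hb hx)
  · refine (ae_restrict_iff' measurableSet_Ioi).2 (ae_of_all _ fun s hs x hx => ?_)
    exact Theta_hasDeriv (s ^ α) x (Real.rpow_nonneg (le_of_lt hs) _) (lt_of_le_of_lt hx hb)

lemma u_eq (α : ℝ) (hα : 1 < α) : ∃ A : ℝ, ∀ t, |t| < Real.pi →
    ∫ s in Set.Ioi (0:ℝ), Theta t (s ^ α) 1 = A * Real.sin (t / α) := by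
  set k0 := ∫ s in Set.Ioi (0 : ℝ), 1 / (s ^ α + 1) with hk0
  refine ⟨k0 * α, fun t ht => ?_⟩
  have hα0 : α ≠ 0 := by linarith
  have hd : ∀ x ∈ Set.Ioo (-Real.pi) Real.pi,
      HasDerivAt (fun x : ℝ => (∫ s in Set.Ioi (0:ℝ), Theta x (s ^ α) 1) -
        k0 * α * Real.sin (x / α)) 0 x := by
    intro x hx
    have h1 := u_hasDeriv α x hα (abs_lt.2 hx)
    have h2 : HasDerivAt (fun x : ℝ => k0 * α * Real.sin (x / α))
        (k0 * α * (Real.cos (x / α) * (1 / α))) x :=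
      (((hasDerivAt_id x).div_const α).sin).const_mul _
    refine HasDerivAt.congr_deriv (f := fun x : ℝ => (∫ s in Set.Ioi (0:ℝ), Theta x (s ^ α) 1) -
        k0 * α * Real.sin (x / α)) (h1.sub h2) ?_
    rw [kap_eq α x hα (abs_lt.2 hx), kap_zero, Complex.re_ofReal_mul,
      Complex.exp_ofReal_mul_I_re, ← hk0]
    field_simp
    ring
  have hc := isOpen_Ioo.is_const_of_deriv_eq_zero (isPreconnected_Ioo)
    (fun x hx => (hd x hx).differentiableAt.differentiableWithinAt)
    (fun x hx => (hd x hx).deriv) (abs_lt.1 ht)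
    (show (0:ℝ) ∈ Set.Ioo (-Real.pi) Real.pi from ⟨by linarith [Real.pi_pos], Real.pi_pos⟩)
  have hz : ∫ s in Set.Ioi (0:ℝ), Theta 0 (s ^ α) 1 = 0 := by
    rw [setIntegral_congr_fun (g := fun _ => (0:ℝ)) measurableSet_Ioi
      (fun s hs => Theta_zero _ (Real.rpow_nonneg (le_of_lt hs) _))]
    simp
  simp only [hz, zero_div, Real.sin_zero, mul_zero, sub_zero] at hc
  linarith

lemma Theta_lim (x : ℝ) (hx : x ≠ 1) : Tendsto (fun t => Theta t x 1) (𝓝[<] Real.pi)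
    (𝓝 (if x < 1 then Real.pi else 0)) := by
  have hev : ∀ᶠ t in 𝓝[<] Real.pi, 0 < t ∧ t < Real.pi :=
    (Ioo_mem_nhdsLT Real.pi_pos : Set.Ioo 0 Real.pi ∈ _)
  have hsin : Tendsto Real.sin (𝓝[<] Real.pi) (𝓝[>] 0) := by
    apply tendsto_nhdsWithin_of_tendsto_nhds_of_eventually_within
    · have := (Real.continuous_sin.tendsto Real.pi).mono_left
        (nhdsWithin_le_nhds (s := Set.Iio Real.pi))
      rwa [Real.sin_pi] at this
    · filter_upwards [hev] with t ht using Real.sin_pos_of_pos_of_lt_pi ht.1 ht.2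
  have hcos : Tendsto (fun t => x + Real.cos t) (𝓝[<] Real.pi) (𝓝 (x - 1)) := by
    have := ((Real.continuous_cos.tendsto Real.pi).mono_left
        (nhdsWithin_le_nhds (s := Set.Iio Real.pi))).const_add x
    rwa [Real.cos_pi, ← sub_eq_add_neg] at this
  have hinv := tendsto_inv_nhdsGT_zero.comp hsin
  have heq : (fun t => Real.pi / 2 - Real.arctan ((x + Real.cos t) * (Real.sin t)⁻¹))
      =ᶠ[𝓝[<] Real.pi] (fun t => Theta t x 1) := by
    filter_upwards [hev] with t ht
    rw [Theta_eq t x 1 ht.1 ht.2 one_pos, div_one, div_eq_mul_inv (x + Real.cos t)]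
  refine Tendsto.congr' heq ?_
  split_ifs with h
  · have h1 := hcos.neg_mul_atTop (by linarith) hinv
    have h2 := (tendsto_nhds_of_tendsto_nhdsWithin Real.tendsto_arctan_atBot).comp h1
    have h3 := h2.const_sub (Real.pi / 2)
    have e : Real.pi / 2 - -(Real.pi / 2) = Real.pi := by ring
    rw [e] at h3
    exact h3
  · have h1 := hcos.pos_mul_atTop (by
      have : 1 < x := lt_of_le_of_ne (not_lt.1 h) (Ne.symm hx)
      linarith) hinv
    have h2 := (tendsto_nhds_of_tendsto_nhdsWithin Real.tendsto_arctan_atTop).comp h1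
    have h3 := h2.const_sub (Real.pi / 2)
    rw [sub_self] at h3
    exact h3

lemma u_lim (α : ℝ) (hα : 1 < α) :
    Tendsto (fun t => ∫ s in Set.Ioi (0:ℝ), Theta t (s ^ α) 1) (𝓝[<] Real.pi) (𝓝 Real.pi) := by
  have hev : ∀ᶠ t in 𝓝[<] Real.pi, 0 < t ∧ t < Real.pi :=
    (Ioo_mem_nhdsLT Real.pi_pos : Set.Ioo 0 Real.pi ∈ _)
  have hI : ∫ s in Set.Ioi (0:ℝ), (Set.Iio (1:ℝ)).indicator (fun _ => Real.pi) s = Real.pi := by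
    rw [setIntegral_indicator measurableSet_Iio, Set.Ioi_inter_Iio]
    simp
  have key : Tendsto (fun t => ∫ s in Set.Ioi (0:ℝ), Theta t (s ^ α) 1) (𝓝[<] Real.pi)
      (𝓝 (∫ s in Set.Ioi (0:ℝ), (Set.Iio (1:ℝ)).indicator (fun _ => Real.pi) s)) := by
    refine tendsto_integral_filter_of_dominated_convergence
      (fun s => 3 * Real.pi * (1 / (1 + s ^ α))) ?_ ?_ ((int_bound α hα).const_mul _) ?_
    · exact Eventually.of_forall fun x => (Theta_meas α x).aestronglyMeasurable
    · filter_upwards [hev] with t ht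
      refine (ae_restrict_iff' measurableSet_Ioi).2 (ae_of_all _ fun s hs => ?_)
      rw [Real.norm_of_nonneg (Theta_nonneg t _ _ ht.1 ht.2 one_pos), mul_one_div]
      exact Theta_decay_one t _ ht.1 ht.2 (Real.rpow_nonneg (le_of_lt hs) _)
    · have hne : ∀ᵐ s : ℝ ∂(volume.restrict (Set.Ioi (0:ℝ))), s ≠ 1 :=
        ae_restrict_of_ae (Measure.ae_ne volume 1)
      filter_upwards [hne, ae_restrict_mem measurableSet_Ioi] with s hs1 hs0
      have hs0' : 0 < s := hs0
      have hiff : s ^ α < 1 ↔ s < 1 := by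
        constructor
        · intro h; by_contra! h'
          linarith [Real.one_le_rpow h' (by linarith : 0 ≤ α)]
        · intro h; exact Real.rpow_lt_one hs0'.le h (by linarith)
      have hne' : s ^ α ≠ 1 := by
        rcases lt_or_gt_of_ne hs1 with h | h
        · exact (hiff.2 h).ne
        · exact (Real.one_lt_rpow h (by linarith)).ne'
      have := Theta_lim (s ^ α) hne'
      simp only [hiff] at this
      simpa [Set.indicator_apply] using this
  rwa [hI] at key

lemma drift_one (θ : ℝ) (h0 : 0 < θ) (h1 : θ < Real.pi) :
    ∫ s in Set.Ioi (0:ℝ), Theta θ (s ^ (1 + θ / Real.pi)) 1 = Real.pi := by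
  have hpi := Real.pi_pos
  set α := 1 + θ / Real.pi with hαd
  have hα : 1 < α := by
    have : 0 < θ / Real.pi := by positivity
    linarith
  obtain ⟨A, hA⟩ := u_eq α hα
  have hlim : Tendsto (fun t => A * Real.sin (t / α)) (𝓝[<] Real.pi)
      (𝓝 (A * Real.sin (Real.pi / α))) := by
    have : Continuous (fun t => A * Real.sin (t / α)) := by fun_prop
    exact (this.tendsto Real.pi).mono_left nhdsWithin_le_nhds
  have hev : ∀ᶠ t in 𝓝[<] Real.pi, 0 < t ∧ t < Real.pi :=
    (Ioo_mem_nhdsLT Real.pi_pos : Set.Ioo 0 Real.pi ∈ _)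
  have hlim2 : Tendsto (fun t => A * Real.sin (t / α)) (𝓝[<] Real.pi) (𝓝 Real.pi) := by
    refine (u_lim α hα).congr' ?_
    filter_upwards [hev] with t ht
    exact hA t (by rw [abs_of_pos ht.1]; exact ht.2)
  have hval := tendsto_nhds_unique hlim hlim2
  rw [hA θ (by rwa [abs_of_pos h0]), ← hval, ← Real.sin_pi_sub (Real.pi / α)]
  congr 2
  have : α * Real.pi = Real.pi + θ := by rw [hαd]; field_simp
  have hα0 : α ≠ 0 := by linarith
  field_simp
  linarith

/-- Sum over the model sequence `k ^ α`. -/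
lemma model_sum (θ : ℝ) (h0 : 0 < θ) (h1 : θ < Real.pi) (m : ℕ) (hm : 1 ≤ m) :
    (Summable fun k : ℕ => Theta θ (((k + 1 : ℕ) : ℝ) ^ (1 + θ / Real.pi))
      ((m : ℝ) ^ (1 + θ / Real.pi))) ∧
    ∑' k : ℕ, Theta θ (((k + 1 : ℕ) : ℝ) ^ (1 + θ / Real.pi)) ((m : ℝ) ^ (1 + θ / Real.pi)) ≤
      Real.pi * m ∧
    Real.pi * m - θ ≤
      ∑' k : ℕ, Theta θ (((k + 1 : ℕ) : ℝ) ^ (1 + θ / Real.pi)) ((m : ℝ) ^ (1 + θ / Real.pi)) := by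
  have hpi := Real.pi_pos
  have hd := drift_one θ h0 h1
  have hα : 1 < 1 + θ / Real.pi := by
    have : 0 < θ / Real.pi := by positivity
    linarith
  have hint1 := Theta_int (1 + θ / Real.pi) θ hα (by rwa [abs_of_pos h0])
  set α := 1 + θ / Real.pi with hαd
  have hm0 : (0:ℝ) < m := by exact_mod_cast hm
  have hM : 0 < (m : ℝ) ^ α := Real.rpow_pos_of_pos hm0 _
  set f : ℝ → ℝ := fun s => Theta θ (s ^ α) ((m : ℝ) ^ α) with hf
  have hfs : ∀ s ∈ Set.Ioi (0:ℝ), f s = Theta θ (((m : ℝ)⁻¹ * s) ^ α) 1 := by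
    intro s hs
    have hs' : 0 < s := hs
    rw [hf, ← Theta_smul θ (((m : ℝ)⁻¹ * s) ^ α) 1 _ hM, ← Real.mul_rpow hm0.le (by positivity),
      mul_inv_cancel_left₀ hm0.ne', mul_one]
  have hint : IntegrableOn f (Set.Ioi 0) := by
    have h := (integrableOn_Ioi_comp_mul_left_iff (fun s => Theta θ (s ^ α) 1) 0
      (inv_pos.2 hm0)).2 (by simpa using hint1)
    exact h.congr_fun (fun s hs => (hfs s hs).symm) measurableSet_Ioi
  have hval : ∫ s in Set.Ioi (0:ℝ), f s = Real.pi * m := by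
    rw [setIntegral_congr_fun measurableSet_Ioi hfs,
      integral_comp_mul_left_Ioi (fun s => Theta θ (s ^ α) 1) 0 (inv_pos.2 hm0)]
    simp only [mul_zero, hd, inv_inv, smul_eq_mul]
    ring
  have hnn : ∀ t ∈ Set.Ioi (0:ℝ), 0 ≤ f t := fun t _ => Theta_nonneg θ _ _ h0 h1 hM
  have hanti : AntitoneOn f (Set.Ici 0) := by
    intro a ha b hb hab
    have ha' : (0:ℝ) ≤ a := ha
    have hab' : a ^ α ≤ b ^ α := Real.rpow_le_rpow ha hab (by linarith)
    simp only [hf]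
    rw [Theta_eq θ _ _ h0 h1 hM, Theta_eq θ _ _ h0 h1 hM]
    have hs : 0 < Real.sin θ := Real.sin_pos_of_pos_of_lt_pi h0 h1
    have : Real.arctan ((a ^ α / (m : ℝ) ^ α + Real.cos θ) / Real.sin θ) ≤
        Real.arctan ((b ^ α / (m : ℝ) ^ α + Real.cos θ) / Real.sin θ) := by
      apply Real.arctan_mono
      gcongr
    linarith
  have hsum := hanti.summable_of_integrableOn_Ioi_zero hint hnn
  have hsum1 := (summable_nat_add_iff 1).2 hsum
  refine ⟨hsum1, ?_, ?_⟩
  · rw [← hval]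
    exact hanti.tsum_add_one_le_integral hint hnn
  · have h2 := hanti.integral_le_tsum hsum hnn
    rw [hval, hsum.tsum_eq_zero_add] at h2
    have h3 : f ((0:ℕ):ℝ) ≤ θ := Theta_le θ _ _ h0 h1 hM (Real.rpow_nonneg (by simp) _)
    have h4 : ∑' k : ℕ, f ((k + 1 : ℕ) : ℝ) = ∑' k : ℕ, Theta θ (((k + 1 : ℕ) : ℝ) ^ α)
      ((m : ℝ) ^ α) := rfl
    linarith

lemma hi_ok (θ : ℝ) (h0 : 0 < θ) (h1 : θ < Real.pi) (B : ℝ) (C : ℕ)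
    (hC : θ + Real.pi * B ≤ C * (Real.pi - θ)) (j : ℕ) :
    Real.pi * ((j + 1 : ℕ) + B) ≤ ∑' k : ℕ, Theta θ (((k + 1 + C : ℕ) : ℝ) ^ (1 + θ / Real.pi))
      (((j + 1 + C : ℕ) : ℝ) ^ (1 + θ / Real.pi)) := by
  obtain ⟨hs, -, hl⟩ := model_sum θ h0 h1 (j + 1 + C) (by omega)
  have hM : 0 < ((j + 1 + C : ℕ) : ℝ) ^ (1 + θ / Real.pi) :=
    Real.rpow_pos_of_pos (by positivity) _
  rw [← hs.sum_add_tsum_nat_add C] at hl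
  have hle : ∑ k ∈ Finset.range C, Theta θ (((k + 1 : ℕ) : ℝ) ^ (1 + θ / Real.pi))
      (((j + 1 + C : ℕ) : ℝ) ^ (1 + θ / Real.pi)) ≤ C * θ := by
    refine (Finset.sum_le_card_nsmul _ _ θ (fun k _ => ?_)).trans (by simp)
    exact Theta_le θ _ _ h0 h1 hM (by positivity)
  have he : ∑' k : ℕ, Theta θ (((k + C + 1 : ℕ) : ℝ) ^ (1 + θ / Real.pi))
      (((j + 1 + C : ℕ) : ℝ) ^ (1 + θ / Real.pi)) =
    ∑' k : ℕ, Theta θ (((k + 1 + C : ℕ) : ℝ) ^ (1 + θ / Real.pi))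
      (((j + 1 + C : ℕ) : ℝ) ^ (1 + θ / Real.pi)) := by
    congr 1; funext k; rw [add_right_comm]
  rw [he] at hl
  push_cast at hl hle ⊢
  nlinarith

/-- The lower barrier. -/
noncomputable def loSeq (α δ : ℝ) (C k : ℕ) : ℝ :=
  if k < C then δ ^ (C - k) else ((k + 1 - C : ℕ) : ℝ) ^ α

lemma loSeq_pos (α δ : ℝ) (hδ : 0 < δ) (C k : ℕ) : 0 < loSeq α δ C k := by
  unfold loSeq
  split_ifs with h
  · positivity
  · apply Real.rpow_pos_of_pos
    exact_mod_cast (by omega : 0 < k + 1 - C)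

lemma loSeq_add (α δ : ℝ) (C k : ℕ) : loSeq α δ C (k + C) = ((k + 1 : ℕ) : ℝ) ^ α := by
  unfold loSeq
  rw [if_neg (by omega)]
  congr 2
  omega

lemma loSeq_summable (α δ : ℝ) (hα : 1 < α) (C : ℕ) :
    Summable fun k => 1 / loSeq α δ C k := by
  rw [← summable_nat_add_iff C]
  simp only [loSeq_add]
  exact (summable_nat_add_iff 1).2 (Real.summable_one_div_nat_rpow.2 hα)

lemma lo_summable (θ : ℝ) (h0 : 0 < θ) (h1 : θ < Real.pi) (α δ : ℝ) (hα : 1 < α) (hδ : 0 < δ)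
    (C : ℕ) (y : ℝ) (hy : 0 < y) : Summable fun k => Theta θ (loSeq α δ C k) y := by
  refine Summable.of_nonneg_of_le (fun k => Theta_nonneg θ _ _ h0 h1 hy) (fun k => ?_)
      ((loSeq_summable α δ hα C).mul_left (3 * Real.pi * y))
  refine (Theta_decay θ _ _ h0 h1 hy (loSeq_pos α δ hδ C k)).trans (le_of_eq ?_)
  ring

lemma lo_ok_large (θ : ℝ) (h0 : 0 < θ) (h1 : θ < Real.pi) (B δ : ℝ) (hδ : 0 < δ) (C : ℕ)
    (hC : Real.pi * B ≤ C * (Real.pi - θ)) (j : ℕ) (hj : C ≤ j) :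
    ∑' k : ℕ, Theta θ (loSeq (1 + θ / Real.pi) δ C k) (loSeq (1 + θ / Real.pi) δ C j) ≤
      Real.pi * ((j + 1 : ℕ) - B) := by
  have hpi := Real.pi_pos
  have hα : 1 < 1 + θ / Real.pi := by
    have : 0 < θ / Real.pi := by positivity
    linarith
  obtain ⟨i, rfl⟩ : ∃ i, j = i + C := ⟨j - C, by omega⟩
  have hp := loSeq_pos (1 + θ / Real.pi) δ hδ C (i + C)
  obtain ⟨-, hu, -⟩ := model_sum θ h0 h1 (i + 1) (by omega)
  rw [← (lo_summable θ h0 h1 _ δ hα hδ C _ hp).sum_add_tsum_nat_add C]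
  have hle : ∑ k ∈ Finset.range C, Theta θ (loSeq (1 + θ / Real.pi) δ C k)
      (loSeq (1 + θ / Real.pi) δ C (i + C)) ≤ C * θ := by
    refine (Finset.sum_le_card_nsmul _ _ θ (fun k _ => ?_)).trans (by simp)
    exact Theta_le θ _ _ h0 h1 hp (loSeq_pos _ δ hδ C k).le
  simp only [loSeq_add] at hle ⊢
  push_cast at hle hu ⊢
  nlinarith

lemma lo_ok_small (θ : ℝ) (h0 : 0 < θ) (h1 : θ < Real.pi) (δ : ℝ) (hδ : 0 < δ) (hδ1 : δ ≤ 1)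
    (C : ℕ) (j : ℕ) (hj : j < C) :
    ∑' k : ℕ, Theta θ (loSeq (1 + θ / Real.pi) δ C k) (loSeq (1 + θ / Real.pi) δ C j) ≤
      ((j : ℝ) + 1 / 2) * θ + δ * (3 * Real.pi * (C +
        ∑' k : ℕ, 1 / ((k + 1 : ℕ) : ℝ) ^ (1 + θ / Real.pi))) := by
  have hpi := Real.pi_pos
  have hα : 1 < 1 + θ / Real.pi := by
    have : 0 < θ / Real.pi := by positivity
    linarith
  set α := 1 + θ / Real.pi with hαd
  have hp := loSeq_pos α δ hδ C j
  have hs := lo_summable θ h0 h1 α δ hα hδ C _ hp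
  have hsum : Summable fun k : ℕ => 1 / ((k + 1 : ℕ) : ℝ) ^ α :=
    (summable_nat_add_iff 1).2 (Real.summable_one_div_nat_rpow.2 hα)
  have hjv : loSeq α δ C j = δ ^ (C - j) := by rw [loSeq, if_pos hj]
  have hjd : loSeq α δ C j ≤ δ := by
    rw [hjv]
    exact pow_le_of_le_one hδ.le hδ1 (by omega)
  rw [← hs.sum_add_tsum_nat_add C]
  have htail : ∑' k : ℕ, Theta θ (loSeq α δ C (k + C)) (loSeq α δ C j) ≤
      3 * Real.pi * δ * ∑' k : ℕ, 1 / ((k + 1 : ℕ) : ℝ) ^ α := by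
    rw [← tsum_mul_left]
    have hs2 := (summable_nat_add_iff
      (f := fun k => Theta θ (loSeq α δ C k) (loSeq α δ C j)) C).2 hs
    refine Summable.tsum_le_tsum (fun k => ?_) hs2 (hsum.mul_left _)
    have hpk := loSeq_pos α δ hδ C (k + C)
    refine (Theta_decay θ _ _ h0 h1 hp hpk).trans ?_
    rw [loSeq_add] at hpk ⊢
    calc 3 * Real.pi * (loSeq α δ C j / ((k + 1 : ℕ) : ℝ) ^ α)
        ≤ 3 * Real.pi * (δ / ((k + 1 : ℕ) : ℝ) ^ α) := by gcongr
      _ = _ := by ring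
  have hhead : ∑ k ∈ Finset.range C, Theta θ (loSeq α δ C k) (loSeq α δ C j) ≤
      ((j : ℝ) + 1 / 2) * θ + C * (3 * Real.pi * δ) := by
    have hb : ∀ k ∈ Finset.range C, Theta θ (loSeq α δ C k) (loSeq α δ C j) ≤
        ((if k < j then θ else 0) + (if k = j then θ / 2 else 0)) + 3 * Real.pi * δ := by
      intro k hk
      have hk' : k < C := Finset.mem_range.1 hk
      have hpk := loSeq_pos α δ hδ C k
      have h3 : 0 ≤ 3 * Real.pi * δ := by positivity
      rcases lt_trichotomy k j with h | h | h
      · rw [if_pos h, if_neg h.ne]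
        have := Theta_le θ (loSeq α δ C k) _ h0 h1 hp hpk.le
        linarith
      · subst h
        rw [Theta_self θ _ h0 h1 hp]
        simp
        linarith
      · rw [if_neg (by omega), if_neg (by omega)]
        refine (Theta_decay θ _ _ h0 h1 hp hpk).trans ?_
        have hkv : loSeq α δ C k = δ ^ (C - k) := by rw [loSeq, if_pos hk']
        have hr : loSeq α δ C j / loSeq α δ C k ≤ δ := by
          rw [hjv, hkv, div_le_iff₀ (by positivity), ← pow_succ']
          exact pow_le_pow_of_le_one hδ.le hδ1 (by omega)
        have : 3 * Real.pi * (loSeq α δ C j / loSeq α δ C k) ≤ 3 * Real.pi * δ := by gcongr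
        linarith
    refine (Finset.sum_le_sum hb).trans (le_of_eq ?_)
    rw [Finset.sum_add_distrib, Finset.sum_add_distrib, Finset.sum_ite_eq', if_pos (by simpa using hj)]
    have hfil : Finset.filter (fun k => k < j) (Finset.range C) = Finset.range j := by
      ext k; simp; omega
    rw [← Finset.sum_filter, hfil]
    simp
    ring
  have : 0 ≤ δ := hδ.le
  linarith

lemma asymp_bound (α : ℝ) (hα : 1 < α) (hα2 : α ≤ 2) (C : ℕ) (k : ℕ) (hk : C < k) (p : ℝ)
    (hl : ((k - C : ℕ) : ℝ) ^ α ≤ p) (hu : p ≤ ((k + C : ℕ) : ℝ) ^ α) :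
    |p - (k : ℝ) ^ α| ≤ (3 * C) * (k : ℝ) ^ (α - 1) := by
  have hk0 : (0:ℝ) < k := by exact_mod_cast (by omega : 0 < k)
  have hCk : (C : ℝ) ≤ k := by exact_mod_cast hk.le
  have hC0 : (0:ℝ) ≤ C := by positivity
  have hx1 : (C : ℝ) / k ≤ 1 := by rw [div_le_one hk0]; exact hCk
  have hx0 : 0 ≤ (C : ℝ) / k := by positivity
  have hkα : 0 < (k : ℝ) ^ α := Real.rpow_pos_of_pos hk0 _
  have e1 : (k : ℝ) ^ (α - 1) = (k : ℝ) ^ α / k := Real.rpow_sub_one hk0.ne' _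
  have hup : ((k + C : ℕ) : ℝ) ^ α ≤ (k : ℝ) ^ α * (1 + 3 * (C / k)) := by
    have : ((k + C : ℕ) : ℝ) = k * (1 + C / k) := by push_cast; field_simp
    rw [this, Real.mul_rpow hk0.le (by positivity)]
    gcongr
    calc (1 + (C : ℝ) / k) ^ α ≤ (1 + (C : ℝ) / k) ^ (2 : ℝ) :=
          Real.rpow_le_rpow_of_exponent_le (by linarith) hα2
      _ = (1 + (C : ℝ) / k) ^ 2 := by norm_cast
      _ ≤ _ := by nlinarith
  have hlow : (k : ℝ) ^ α * (1 - 2 * (C / k)) ≤ ((k - C : ℕ) : ℝ) ^ α := by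
    have : ((k - C : ℕ) : ℝ) = k * (1 + -(C / k)) := by
      rw [Nat.cast_sub hk.le]; field_simp; ring
    rw [this, Real.mul_rpow hk0.le (by linarith)]
    gcongr
    have := one_add_mul_self_le_rpow_one_add (s := -((C : ℝ) / k)) (by linarith) hα.le
    nlinarith
  have e2 : (3 * C) * (k : ℝ) ^ (α - 1) = (k : ℝ) ^ α * (3 * (C / k)) := by rw [e1]; ring
  rw [e2, abs_le]
  have h5 : 0 ≤ (k : ℝ) ^ α * (C / k) := by positivity
  constructor <;> nlinarith

theorem stmt_1 (θ : ℝ) (hθ : 0 < θ) (hθπ : θ < Real.pi)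
    (Q : ℕ → ℝ) (hQpos : ∀ k, 1 ≤ k → 0 < Q k)
    (hQ : (fun k : ℕ => Q k - (k : ℝ)) =O[atTop] fun _ : ℕ => (1 : ℝ))
    (hQ' : ∀ k : ℕ, 1 ≤ k → ((k : ℝ) - 1 / 2) * θ / Real.pi < Q k) :
    ∃ P : ℕ → ℝ, (∀ k, 1 ≤ k → 0 < P k) ∧
      (∀ j, 1 ≤ j → phi θ P P j = ENNReal.ofReal (Q j)) ∧
      (fun k : ℕ => P k - (k : ℝ) ^ (1 + θ / Real.pi)) =O[atTop]
        fun k : ℕ => (k : ℝ) ^ (1 + θ / Real.pi - 1) := by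
  have hpi := Real.pi_pos
  have hα : 1 < 1 + θ / Real.pi := by
    have : 0 < θ / Real.pi := by positivity
    linarith
  have hα2 : 1 + θ / Real.pi ≤ 2 := by
    have : θ / Real.pi ≤ 1 := (div_le_one hpi).2 hθπ.le
    linarith
  obtain ⟨B, hB⟩ := (isBigO_one_nat_atTop_iff).1 hQ
  have hB' : ∀ n, -B ≤ Q n - n ∧ Q n - n ≤ B := fun n => abs_le.1 (hB n)
  obtain ⟨C, hC⟩ := exists_nat_ge ((θ + Real.pi * B) / (Real.pi - θ))
  rw [div_le_iff₀ (by linarith)] at hC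
  set M : ℝ := 3 * Real.pi * (C + ∑' k : ℕ, 1 / ((k + 1 : ℕ) : ℝ) ^ (1 + θ / Real.pi)) with hM
  -- choose δ
  obtain ⟨δ, hδ, hδ1, hδM⟩ : ∃ δ : ℝ, 0 < δ ∧ δ ≤ 1 ∧ ∀ j < C,
      ((j : ℝ) + 1 / 2) * θ + δ * M ≤ Real.pi * Q (j + 1) := by
    have hev : ∀ᶠ δ : ℝ in 𝓝[>] 0, ∀ j ∈ Finset.range C,
        ((j : ℝ) + 1 / 2) * θ + δ * M ≤ Real.pi * Q (j + 1) := by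
      rw [Filter.eventually_all_finset]
      intro j _
      have hlt : ((j : ℝ) + 1 / 2) * θ + 0 * M < Real.pi * Q (j + 1) := by
        have := hQ' (j + 1) (by omega)
        rw [div_lt_iff₀ hpi] at this
        push_cast at this
        nlinarith
      have hc : Continuous fun δ : ℝ => ((j : ℝ) + 1 / 2) * θ + δ * M := by fun_prop
      have := hc.continuousAt.eventually (gt_mem_nhds hlt)
      exact (this.filter_mono nhdsWithin_le_nhds).mono fun x hx => le_of_lt hx
    have hev2 : ∀ᶠ δ : ℝ in 𝓝[>] 0, 0 < δ ∧ δ ≤ 1 := by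
      filter_upwards [Ioo_mem_nhdsGT (zero_lt_one : (0:ℝ) < 1)] with x hx using ⟨hx.1, hx.2.le⟩
    obtain ⟨δ, h1, h2⟩ := (hev.and hev2).exists
    exact ⟨δ, h2.1, h2.2, fun j hj => h1 j (Finset.mem_range.2 hj)⟩
  have g1 : ∀ k, loSeq (1 + θ / Real.pi) δ C k ≤ ((k + 1 + C : ℕ) : ℝ) ^ (1 + θ / Real.pi) := by
    intro k
    unfold loSeq
    split_ifs with h
    · refine (pow_le_one₀ hδ.le hδ1).trans (Real.one_le_rpow ?_ (by linarith))
      exact_mod_cast (by omega : 1 ≤ k + 1 + C)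
    · refine Real.rpow_le_rpow (by positivity) ?_ (by linarith)
      exact_mod_cast (by omega : k + 1 - C ≤ k + 1 + C)
  have g2 : ∀ j, ∑' k, Theta θ (loSeq (1 + θ / Real.pi) δ C k) (loSeq (1 + θ / Real.pi) δ C j) ≤
      Real.pi * Q (j + 1) := by
    intro j
    rcases lt_or_ge j C with h | h
    · exact (lo_ok_small θ hθ hθπ δ hδ hδ1 C j h).trans (hδM j h)
    · refine (lo_ok_large θ hθ hθπ B δ hδ C (by linarith) j h).trans ?_
      have := (hB' (j + 1)).1
      gcongr
      linarith
  have g3 : ∀ j : ℕ, Real.pi * Q (j + 1) ≤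
      ∑' k : ℕ, Theta θ (((k + 1 + C : ℕ) : ℝ) ^ (1 + θ / Real.pi))
        (((j + 1 + C : ℕ) : ℝ) ^ (1 + θ / Real.pi)) := by
    intro j
    refine le_trans ?_ (hi_ok θ hθ hθπ B C hC j)
    have := (hB' (j + 1)).2
    gcongr
    linarith
  obtain ⟨p, hpl, hpu, hpe⟩ := exists_fixed θ hθ hθπ (loSeq (1 + θ / Real.pi) δ C)
    (fun k => ((k + 1 + C : ℕ) : ℝ) ^ (1 + θ / Real.pi)) (fun j => Real.pi * Q (j + 1))
    (loSeq_pos _ δ hδ C) g1 (loSeq_summable _ δ hα C) g2 g3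
  have hp0 : ∀ k, 0 < p k := fun k => (loSeq_pos _ δ hδ C k).trans_le (hpl k)
  refine ⟨fun k => p (k - 1), fun k _ => hp0 _, fun j hj => ?_, ?_⟩
  · obtain ⟨i, rfl⟩ : ∃ i, j = i + 1 := ⟨j - 1, by omega⟩
    obtain ⟨hs, he⟩ := hpe i
    simp only [phi, Nat.add_sub_cancel]
    rw [← ENNReal.ofReal_tsum_of_nonneg (fun k => Theta_nonneg θ _ _ hθ hθπ (hp0 i)) hs, he,
      ← ENNReal.ofReal_mul (by positivity)]
    congr 1
    field_simp
  · refine IsBigO.of_bound (3 * C) ?_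
    filter_upwards [eventually_gt_atTop C] with k hk
    rw [Real.norm_eq_abs, Real.norm_of_nonneg (by positivity)]
    refine asymp_bound _ hα hα2 C k hk _ ?_ ?_
    · have := hpl (k - 1)
      rw [loSeq, if_neg (by omega)] at this
      rwa [show k - C = k - 1 + 1 - C by omega]
    · have := hpu (k - 1)
      rwa [show k + C = k - 1 + 1 + C by omega]
end

section
/- Assume Q_k = k + O(1) and Q_k > (k − 1/2)·θ/π for all k. Let P be a sequence of positive reals with φ_j(P,P) = Q_j for all j and ln P_k = α_θ·ln k + o(1). Let (X^{(n)})_{n≥0} be a sequence of sequences of positive reals such that ln X^{(0)}_k = α_θ·ln k + o(1) as k → ∞ and φ_j(X^{(n)}, X^{(n+1)}) = Q_j for all j ≥ 1 and n ≥ 0. Then sup_{k≥1} |ln X^{(n)}_k − ln P_k| → 0 as n → ∞. -/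
open Filter Asymptotics MeasureTheory
open scoped ENNReal Topology

/-- logarithmic form of `Theta` -/
noncomputable def fTh (θ u : ℝ) : ℝ :=
  Real.pi / 2 - Real.arctan ((Real.exp u + Real.cos θ) / Real.sin θ)

lemma arg_im_pos_aux (a s : ℝ) (hs : 0 < s) :
    Complex.arg ((a : ℂ) + (s : ℂ) * Complex.I) = Real.pi / 2 - Real.arctan (a / s) := by
  set t := a / s with ht
  have hpos : 0 < Real.sqrt (1 + t ^ 2) := Real.sqrt_pos.mpr (by positivity)
  have h1 := Real.arctan_lt_pi_div_two t
  have h2 := Real.neg_pi_div_two_lt_arctan t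
  have key := Complex.arg_mul_cos_add_sin_mul_I (r := s * Real.sqrt (1 + t ^ 2))
    (θ := Real.pi / 2 - Real.arctan t) (by positivity) ⟨by linarith [Real.pi_pos], by linarith⟩
  rw [← key]
  congr 1
  rw [← Complex.ofReal_cos, ← Complex.ofReal_sin, Real.cos_pi_div_two_sub, Real.sin_pi_div_two_sub,
    Real.sin_arctan, Real.cos_arctan]
  apply Complex.ext
  · simp
    rw [ht]; field_simp
  · simp
    field_simp

lemma Theta_eq_s3 (θ : ℝ) (hθ : 0 < θ) (hθπ : θ < Real.pi) (x y : ℝ) (hx : 0 < x) (hy : 0 < y) :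
    Theta θ x y = fTh θ (Real.log x - Real.log y) := by
  have hs : 0 < Real.sin θ := Real.sin_pos_of_pos_of_lt_pi hθ hθπ
  unfold Theta fTh
  have : (x : ℂ) + (y : ℂ) * Complex.exp (θ * Complex.I)
      = ((x + y * Real.cos θ : ℝ) : ℂ) + ((y * Real.sin θ : ℝ) : ℂ) * Complex.I := by
    rw [Complex.exp_mul_I, ← Complex.ofReal_cos, ← Complex.ofReal_sin]
    push_cast; ring
  rw [this, arg_im_pos_aux _ _ (by positivity), Real.exp_sub, Real.exp_log hx, Real.exp_log hy]
  congr 2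
  field_simp

lemma fTh_strictAnti (θ : ℝ) (hθ : 0 < θ) (hθπ : θ < Real.pi) : StrictAnti (fTh θ) := by
  have hs : 0 < Real.sin θ := Real.sin_pos_of_pos_of_lt_pi hθ hθπ
  intro u v h
  unfold fTh
  have : Real.arctan ((Real.exp u + Real.cos θ) / Real.sin θ)
      < Real.arctan ((Real.exp v + Real.cos θ) / Real.sin θ) := by
    apply Real.arctan_strictMono
    have := Real.exp_lt_exp.mpr h
    gcongr
  linarith

lemma fTh_cont (θ : ℝ) : Continuous (fTh θ) := by
  unfold fTh
  fun_prop

lemma arctan_cot_aux (c : ℝ) (hc : 0 < c) (hcπ : c < Real.pi) :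
    Real.pi / 2 - Real.arctan (Real.cos c / Real.sin c) = c := by
  have : Real.cos c / Real.sin c = Real.tan (Real.pi / 2 - c) := by
    rw [Real.tan_eq_sin_div_cos, Real.sin_pi_div_two_sub, Real.cos_pi_div_two_sub]
  rw [this, Real.arctan_tan (by linarith) (by linarith)]
  ring

lemma fTh_bot (θ : ℝ) (hθ : 0 < θ) (hθπ : θ < Real.pi) :
    Tendsto (fTh θ) atBot (𝓝 θ) := by
  have h : Tendsto (fTh θ) atBot
      (𝓝 (Real.pi / 2 - Real.arctan ((0 + Real.cos θ) / Real.sin θ))) := by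
    unfold fTh
    refine Tendsto.sub tendsto_const_nhds ?_
    refine (Real.continuous_arctan.tendsto _).comp ?_
    exact (Real.tendsto_exp_atBot.add tendsto_const_nhds).div_const _
  rwa [zero_add, arctan_cot_aux θ hθ hθπ] at h

lemma fTh_top (θ : ℝ) (hθ : 0 < θ) (hθπ : θ < Real.pi) :
    Tendsto (fTh θ) atTop (𝓝 0) := by
  have hs : 0 < Real.sin θ := Real.sin_pos_of_pos_of_lt_pi hθ hθπ
  have h : Tendsto (fTh θ) atTop (𝓝 (Real.pi / 2 - Real.pi / 2)) := by
    unfold fTh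
    refine Tendsto.sub tendsto_const_nhds ?_
    have h1 := Real.tendsto_arctan_atTop.mono_right nhdsWithin_le_nhds
    refine h1.comp ?_
    exact (tendsto_atTop_add_const_right _ _ Real.tendsto_exp_atTop).atTop_div_const hs
  rwa [sub_self] at h

lemma fTh_zero (θ : ℝ) (hθ : 0 < θ) (hθπ : θ < Real.pi) : fTh θ 0 = θ / 2 := by
  have h2 : 0 < Real.sin (θ / 2) := Real.sin_pos_of_pos_of_lt_pi (by linarith) (by linarith)
  have h3 : 0 < Real.cos (θ / 2) := Real.cos_pos_of_mem_Ioo ⟨by linarith, by linarith⟩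
  rw [← arctan_cot_aux (θ / 2) (by linarith) (by linarith)]
  unfold fTh
  congr 2
  have e1 : Real.sin θ = 2 * Real.sin (θ / 2) * Real.cos (θ / 2) := by
    rw [← Real.sin_two_mul]; ring_nf
  have e2 : Real.cos θ = 2 * Real.cos (θ / 2) ^ 2 - 1 := by
    rw [← Real.cos_two_mul]; ring_nf
  rw [e1, e2, Real.exp_zero]
  field_simp
  ring

lemma fTh_pos (θ u : ℝ) : 0 < fTh θ u := by
  unfold fTh
  linarith [Real.arctan_lt_pi_div_two ((Real.exp u + Real.cos θ) / Real.sin θ)]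

lemma fTh_lt (θ : ℝ) (hθ : 0 < θ) (hθπ : θ < Real.pi) (u : ℝ) : fTh θ u < θ := by
  have h1 : fTh θ u < fTh θ (u - 1) := fTh_strictAnti θ hθ hθπ (by linarith)
  have h2 : fTh θ (u - 1) ≤ θ :=
    (fTh_strictAnti θ hθ hθπ).antitone.ge_of_tendsto (fTh_bot θ hθ hθπ) _
  linarith

lemma phi_hasSum (θ : ℝ) (hθ : 0 < θ) (hθπ : θ < Real.pi) (X Y : ℕ → ℝ) (j : ℕ) (q : ℝ)
    (hX : ∀ k, 1 ≤ k → 0 < X k) (hY : 0 < Y j) (hq : 0 < q)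
    (h : phi θ X Y j = ENNReal.ofReal q) :
    HasSum (fun k : ℕ => fTh θ (Real.log (X (k + 1)) - Real.log (Y j))) (Real.pi * q) := by
  unfold phi at h
  have e : ∀ k : ℕ, Theta θ (X (k + 1)) (Y j) = fTh θ (Real.log (X (k + 1)) - Real.log (Y j)) :=
    fun k => Theta_eq_s3 θ hθ hθπ _ _ (hX _ (by omega)) hY
  simp only [e] at h
  set g := fun k : ℕ => fTh θ (Real.log (X (k + 1)) - Real.log (Y j)) with hg
  have hg0 : ∀ k, 0 ≤ g k := fun k => (fTh_pos _ _).le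
  have hne : (∑' k, ENNReal.ofReal (g k)) ≠ ⊤ := by
    intro htop
    rw [htop, ENNReal.mul_top (by simp [Real.pi_pos])] at h
    exact ENNReal.ofReal_ne_top h.symm
  have hsum : Summable g := by
    have := ENNReal.summable_toReal hne
    simpa [ENNReal.toReal_ofReal (hg0 _)] using this
  rw [← ENNReal.ofReal_tsum_of_nonneg hg0 hsum, ← ENNReal.ofReal_mul (by positivity)] at h
  rw [ENNReal.ofReal_eq_ofReal_iff (mul_nonneg (by positivity) (tsum_nonneg hg0)) hq.le] at h
  have : ∑' k, g k = Real.pi * q := by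
    rw [← h]; field_simp
  rw [← this]
  exact hsum.hasSum

/-- comparison step -/
lemma step_upper (f : ℝ → ℝ) (hf : StrictAnti f) (x z : ℕ → ℝ) (y c q : ℝ)
    (hx : HasSum (fun k => f (x k - y)) q) (hz : Summable (fun k => f (z k - c)))
    (hq : q ≤ ∑' k, f (z k - c)) (hle : ∀ k, x k ≤ z k) : y ≤ c := by
  by_contra! hlt
  have h1 : ∑' k, f (z k - c) < ∑' k, f (x k - y) :=
    Summable.tsum_lt_tsum (i := 0) (fun k => (hf (by linarith [hle k])).le)
      (hf (by linarith [hle 0])) hz hx.summable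
  rw [hx.tsum_eq] at h1
  linarith

lemma step_lower (f : ℝ → ℝ) (hf : StrictAnti f) (x z : ℕ → ℝ) (y c q : ℝ)
    (hx : HasSum (fun k => f (x k - y)) q) (hz : Summable (fun k => f (z k - c)))
    (hq : ∑' k, f (z k - c) ≤ q) (hle : ∀ k, z k ≤ x k) : c ≤ y := by
  by_contra! hlt
  have h1 : ∑' k, f (x k - y) < ∑' k, f (z k - c) :=
    Summable.tsum_lt_tsum (i := 0) (fun k => (hf (by linarith [hle k])).le)
      (hf (by linarith [hle 0])) hx.summable hz
  rw [hx.tsum_eq] at h1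
  linarith

/-- limsup argument -/
lemma limsup_le (f : ℝ → ℝ) (hf : StrictAnti f) (hc : Continuous f) (p q lo hi : ℕ → ℝ)
    (x : ℕ → ℕ → ℝ)
    (hp : ∀ j, HasSum (fun k => f (p k - p j)) (q j))
    (hx : ∀ n j, HasSum (fun k => f (x n k - x (n + 1) j)) (q j))
    (hlo : ∀ n k, lo k ≤ x n k) (hhi : ∀ n k, x n k ≤ hi k)
    (hslo : ∀ c, Summable fun k => f (lo k - c)) (hshi : ∀ c, Summable fun k => f (hi k - c))
    (htail : ∀ δ : ℝ, 0 < δ → ∃ K, ∀ n, ∀ k, K ≤ k → x n k ≤ p k + δ) :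
    ∀ k, ∀ ε : ℝ, 0 < ε → ∃ N, ∀ n, N ≤ n → x n k ≤ p k + ε := by
  set b : ℕ → ℕ → ℝ := fun m k => ⨆ i, x (m + i) k with hb
  have hbdd : ∀ m k, BddAbove (Set.range fun i => x (m + i) k) := fun m k =>
    ⟨hi k, by rintro _ ⟨i, rfl⟩; exact hhi _ _⟩
  have hbx : ∀ m n k, m ≤ n → x n k ≤ b m k := by
    intro m n k h
    obtain ⟨i, rfl⟩ := Nat.exists_eq_add_of_le h
    exact le_ciSup (hbdd m k) i
  have hbhi : ∀ m k, b m k ≤ hi k := fun m k => ciSup_le fun i => hhi _ _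
  have hblo : ∀ m k, lo k ≤ b m k := fun m k => (hlo m k).trans (hbx m m k le_rfl)
  have hbanti : ∀ k, Antitone fun m => b m k := by
    intro k m m' h
    exact ciSup_le fun i => hbx _ _ _ (by omega)
  have hbb : ∀ k, BddBelow (Set.range fun m => b m k) := fun k =>
    ⟨lo k, by rintro _ ⟨i, rfl⟩; exact hblo _ _⟩
  set u : ℕ → ℝ := fun k => ⨅ m, b m k with hu
  have hub : ∀ k, Tendsto (fun m => b m k) atTop (𝓝 (u k)) := fun k =>
    tendsto_atTop_ciInf (hbanti k) (hbb k)
  have hule : ∀ m k, u k ≤ b m k := fun m k => ciInf_le (hbb k) m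
  -- limit inequality
  have hlim : ∀ j, Summable (fun k => f (u k - u j)) ∧ ∑' k, f (u k - u j) ≤ q j := by
    intro j
    have ulo : ∀ k, lo k ≤ u k := fun k => le_ciInf fun m => hblo m k
    have uhi : ∀ k, u k ≤ hi k := fun k => (hule 0 k).trans (hbhi 0 k)
    have dom : ∀ k t, lo k - u j ≤ t → t ≤ hi k - (u j - 1) →
        ‖f t‖ ≤ |f (lo k - u j)| + |f (hi k - (u j - 1))| := by
      intro k t h1 h2
      have a1 := hf.antitone h1
      have a2 := hf.antitone h2
      rw [Real.norm_eq_abs, abs_le]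
      constructor
      · linarith [neg_abs_le (f (hi k - (u j - 1))), abs_nonneg (f (lo k - u j))]
      · linarith [le_abs_self (f (lo k - u j)), abs_nonneg (f (hi k - (u j - 1)))]
    have sdom : Summable fun k => |f (lo k - u j)| + |f (hi k - (u j - 1))| :=
      (hslo (u j)).abs.add (hshi (u j - 1)).abs
    have hm : ∀ m : ℕ, (0:ℝ) < 1 / ((m:ℝ) + 1) ∧ 1 / ((m:ℝ) + 1) ≤ 1 := by
      intro m
      refine ⟨by positivity, ?_⟩
      rw [div_le_one (by positivity)]
      have : (0:ℝ) ≤ m := by positivity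
      linarith
    have domm : ∀ m k, ‖f (b m k - (u j - 1 / ((m:ℝ) + 1)))‖
        ≤ |f (lo k - u j)| + |f (hi k - (u j - 1))| := by
      intro m k
      apply dom <;> linarith [hm m, hblo m k, hbhi m k, (hm m).1, (hm m).2]
    refine ⟨Summable.of_norm_bounded sdom fun k => dom k _ ?_ ?_, ?_⟩
    · linarith [ulo k]
    · linarith [uhi k]
    have ht : Tendsto (fun m : ℕ => ∑' k, f (b m k - (u j - 1 / ((m:ℝ) + 1)))) atTop
        (𝓝 (∑' k, f (u k - u j))) := by
      refine tendsto_tsum_of_dominated_convergence sdom ?_ (Eventually.of_forall fun m k => domm m k)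
      intro k
      refine (hc.tendsto _).comp ?_
      have h0 := tendsto_one_div_add_atTop_nhds_zero_nat (𝕜 := ℝ)
      have := (hub k).sub ((tendsto_const_nhds (x := u j)).sub h0)
      simpa using this
    refine le_of_tendsto' ht fun m => ?_
    obtain ⟨i, hi'⟩ : ∃ i, u j - 1 / ((m:ℝ) + 1) < x (m + 1 + i) j := by
      apply exists_lt_of_lt_ciSup
      have := hule (m + 1) j
      have h3 := (hm m).1
      simp only [hb] at this
      linarith
    have h5 := hx (m + i) j
    rw [← h5.tsum_eq]
    refine Summable.tsum_le_tsum (fun k => hf.antitone ?_)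
      (Summable.of_norm_bounded sdom fun k => domm m k) h5.summable
    have : m + i + 1 = m + 1 + i := by ring
    rw [this]
    linarith [hbx m (m + i) k (by omega)]
  -- u ≤ p
  have hup : ∀ k, u k ≤ p k := by
    intro k0
    by_contra! hk0
    set σ := u k0 - p k0 with hσ
    have hσ0 : 0 < σ := by linarith
    obtain ⟨K, hK⟩ := htail (σ / 2) (by linarith)
    have hKu : ∀ k, K ≤ k → u k ≤ p k + σ / 2 := fun k hk =>
      (hule 0 k).trans (ciSup_le fun i => hK _ _ hk)
    obtain ⟨j, hj, hjmax⟩ := Finset.exists_max_image (Finset.range (max K (k0 + 1)))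
      (fun k => u k - p k) ⟨k0, by simp⟩
    have hjk0 : σ ≤ u j - p j := hjmax k0 (by simp)
    have hall : ∀ k, u k - p k ≤ u j - p j := by
      intro k
      by_cases hk : k < max K (k0 + 1)
      · exact hjmax k (by simpa using hk)
      · have := hKu k (by omega)
        linarith
    have h1 : ∑' k, f (p k - p j) < ∑' k, f (u k - u j) :=
      Summable.tsum_lt_tsum (i := K) (fun k => hf.antitone (by linarith [hall k]))
        (hf (by linarith [hKu K le_rfl])) (hp j).summable (hlim j).1
    rw [(hp j).tsum_eq] at h1
    linarith [(hlim j).2]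
  intro k ε hε
  have := (hub k).eventually (gt_mem_nhds (show u k < p k + ε by linarith [hup k]))
  obtain ⟨N, hN⟩ := this.exists
  exact ⟨N, fun n hn => (hbx N n k hn).trans hN.le⟩

section core
variable (θ : ℝ) (f : ℝ → ℝ)

/-- lower barrier: shift by `a`, with steep start -/
noncomputable def lowBar (p : ℕ → ℝ) (a : ℕ) (D : ℝ) (k : ℕ) : ℝ :=
  if k < a then D * ((k : ℝ) - a) else p (k - a)

lemma summable_shift (hf : StrictAnti f) (hpos : ∀ u, 0 < f u) (p q : ℕ → ℝ)
    (hp : ∀ j, HasSum (fun k => f (p k - p j)) (q j)) (hpt : Tendsto p atTop atTop) (c : ℝ) :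
    Summable fun k => f (p k - c) := by
  obtain ⟨j, hj⟩ := (hpt.eventually_ge_atTop c).exists
  exact Summable.of_nonneg_of_le (fun k => (hpos _).le)
    (fun k => hf.antitone (by linarith)) (hp j).summable

lemma summable_lowBar (hf : StrictAnti f) (hpos : ∀ u, 0 < f u) (p q : ℕ → ℝ)
    (hp : ∀ j, HasSum (fun k => f (p k - p j)) (q j)) (hpt : Tendsto p atTop atTop) (c : ℝ)
    (a : ℕ) (D : ℝ) :
    Summable fun k => f (lowBar p a D k - c) := by
  rw [← summable_nat_add_iff a]
  have := summable_shift f hf hpos p q hp hpt c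
  simpa [lowBar] using this

lemma tsum_lowBar (hf : StrictAnti f) (hpos : ∀ u, 0 < f u) (p q : ℕ → ℝ)
    (hp : ∀ j, HasSum (fun k => f (p k - p j)) (q j)) (hpt : Tendsto p atTop atTop) (c : ℝ)
    (a : ℕ) (D : ℝ) :
    ∑' k, f (lowBar p a D k - c)
      = ∑ i ∈ Finset.range a, f (D * ((i : ℝ) - a) - c) + ∑' k, f (p k - c) := by
  rw [← (summable_lowBar f hf hpos p q hp hpt c a D).sum_add_tsum_nat_add a]
  congr 1
  · refine Finset.sum_congr rfl fun i hi => ?_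
    rw [lowBar, if_pos (Finset.mem_range.mp hi)]
  · simp [lowBar]

/-- steepness suffices for the first `a` indices -/
lemma steep (hf : StrictAnti f) (hpos : ∀ u, 0 < f u)
    (hbot : Tendsto f atBot (𝓝 θ)) (htop : Tendsto f atTop (𝓝 0)) (h0 : f 0 = θ / 2)
    (p q : ℕ → ℝ)
    (hp : ∀ j, HasSum (fun k => f (p k - p j)) (q j)) (hpt : Tendsto p atTop atTop)
    (hq : ∀ j : ℕ, ((j : ℝ) + 1 / 2) * θ < q j) (a j : ℕ) (hj : j < a) :
    ∀ᶠ D : ℝ in atTop, ∑ i ∈ Finset.range a, f (D * ((i : ℝ) - a) - D * ((j : ℝ) - a))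
      + ∑' k, f (p k - D * ((j : ℝ) - a)) < q j := by
  have hja : (j : ℝ) < a := by exact_mod_cast hj
  have t1 : Tendsto (fun D : ℝ => ∑ i ∈ Finset.range a,
      f (D * ((i : ℝ) - a) - D * ((j : ℝ) - a))) atTop
      (𝓝 (∑ i ∈ Finset.range a, if i < j then θ else if i = j then θ / 2 else 0)) := by
    refine tendsto_finsetSum _ fun i _ => ?_
    have e : ∀ D : ℝ, D * ((i : ℝ) - a) - D * ((j : ℝ) - a) = D * ((i : ℝ) - j) := by
      intro D; ring
    simp only [e]
    rcases lt_trichotomy i j with h | h | h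
    · rw [if_pos h]
      refine hbot.comp (tendsto_id.atTop_mul_const_of_neg ?_)
      have : (i : ℝ) < j := by exact_mod_cast h
      linarith
    · subst h
      simp [h0]
    · rw [if_neg (by omega), if_neg (by omega)]
      refine htop.comp (tendsto_id.atTop_mul_const ?_)
      have : (j : ℝ) < i := by exact_mod_cast h
      linarith
  have t2 : Tendsto (fun D : ℝ => ∑' k, f (p k - D * ((j : ℝ) - a))) atTop (𝓝 (∑' _k : ℕ, 0)) := by
    refine tendsto_tsum_of_dominated_convergence (summable_shift f hf hpos p q hp hpt 0) ?_ ?_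
    · intro k
      refine htop.comp ?_
      have : Tendsto (fun D : ℝ => p k + D * ((a : ℝ) - j)) atTop atTop :=
        tendsto_atTop_add_const_left _ _ (tendsto_id.atTop_mul_const (by linarith))
      refine this.congr fun D => by ring
    · filter_upwards [eventually_ge_atTop 0] with D hD k
      rw [Real.norm_eq_abs, abs_of_pos (hpos _)]
      apply hf.antitone
      nlinarith
  have t3 := t1.add t2
  refine t3.eventually (gt_mem_nhds ?_)
  have hval : (∑ i ∈ Finset.range a, if i < j then θ else if i = j then θ / 2 else 0)
      = ((j : ℝ) + 1 / 2) * θ := by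
    obtain ⟨d, rfl⟩ := Nat.exists_eq_add_of_lt hj
    rw [show j + d + 1 = (j + 1) + d by ring, Finset.sum_range_add, Finset.sum_range_succ]
    have s1 : (∑ i ∈ Finset.range j, if i < j then θ else if i = j then θ / 2 else 0) = j * θ := by
      rw [Finset.sum_congr rfl fun i hi => if_pos (Finset.mem_range.mp hi)]
      simp
    have s2 : (∑ i ∈ Finset.range d,
        if j + 1 + i < j then θ else if j + 1 + i = j then θ / 2 else 0) = 0 := by
      refine Finset.sum_eq_zero fun i _ => ?_
      rw [if_neg (by omega), if_neg (by omega)]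
    rw [s1, s2]
    simp
    ring
  rw [hval]
  simpa using hq j

lemma upper_barrier (hf : StrictAnti f) (hlt : ∀ u, f u < θ) (p q : ℕ → ℝ)
    (x : ℕ → ℕ → ℝ)
    (hp : ∀ j, HasSum (fun k => f (p k - p j)) (q j))
    (hx : ∀ n j, HasSum (fun k => f (x n k - x (n + 1) j)) (q j))
    (a : ℕ) (hqa : ∀ j, q j + a * θ ≤ q (j + a)) (δ : ℝ)
    (h0 : ∀ k, x 0 k ≤ p (k + a) + δ) : ∀ n k, x n k ≤ p (k + a) + δ := by
  intro n
  induction n with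
  | zero => exact h0
  | succ n ih =>
    intro j
    have e : ∀ k, p (k + a) + δ - (p (j + a) + δ) = p (k + a) - p (j + a) := fun k => by ring
    have hs := (hp (j + a)).summable
    refine step_upper f hf (x n) (fun k => p (k + a) + δ) _ _ (q j) (hx n j) ?_ ?_ ih
    · simp only [e]
      exact (summable_nat_add_iff a).mpr hs
    · simp only [e]
      have h1 := hs.sum_add_tsum_nat_add a
      rw [(hp (j + a)).tsum_eq] at h1
      have h2 : ∑ i ∈ Finset.range a, f (p i - p (j + a)) ≤ a * θ := by
        have := Finset.sum_le_card_nsmul (Finset.range a) (fun i => f (p i - p (j + a))) θ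
          (fun i _ => (hlt _).le)
        simpa using this
      linarith [hqa j]

lemma lower_barrier (hf : StrictAnti f) (hpos : ∀ u, 0 < f u) (hlt : ∀ u, f u < θ)
    (p q : ℕ → ℝ) (x : ℕ → ℕ → ℝ)
    (hp : ∀ j, HasSum (fun k => f (p k - p j)) (q j)) (hpt : Tendsto p atTop atTop)
    (hx : ∀ n j, HasSum (fun k => f (x n k - x (n + 1) j)) (q j))
    (a : ℕ) (D : ℝ) (hqa : ∀ j, q j + a * θ ≤ q (j + a)) (δ : ℝ)
    (hD : ∀ j < a, ∑ i ∈ Finset.range a, f (D * ((i : ℝ) - a) - D * ((j : ℝ) - a))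
      + ∑' k, f (p k - D * ((j : ℝ) - a)) < q j)
    (h0 : ∀ k, lowBar p a D k - δ ≤ x 0 k) : ∀ n k, lowBar p a D k - δ ≤ x n k := by
  intro n
  induction n with
  | zero => exact h0
  | succ n ih =>
    intro j
    have e : ∀ k, lowBar p a D k - δ - (lowBar p a D j - δ) = lowBar p a D k - lowBar p a D j :=
      fun k => by ring
    refine step_lower f hf (x n) (fun k => lowBar p a D k - δ) _ _ (q j) (hx n j) ?_ ?_ ih
    · simp only [e]
      exact summable_lowBar f hf hpos p q hp hpt _ a D
    · simp only [e]
      rw [tsum_lowBar f hf hpos p q hp hpt]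
      by_cases hj : j < a
      · have := hD j hj
        rw [lowBar, if_pos hj]
        exact this.le
      · obtain ⟨d, rfl⟩ := Nat.exists_eq_add_of_le (not_lt.mp hj)
        have h3 : lowBar p a D (a + d) = p d := by simp [lowBar]
        rw [h3, (hp d).tsum_eq]
        have h2 : ∑ i ∈ Finset.range a, f (D * ((i : ℝ) - a) - p d) ≤ a * θ := by
          have := Finset.sum_le_card_nsmul (Finset.range a)
            (fun i : ℕ => f (D * ((i : ℝ) - a) - p d)) θ (fun i _ => (hlt _).le)
          simpa using this
        have := hqa d
        rw [add_comm d a] at this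
        linarith

lemma core (hf : StrictAnti f) (hc : Continuous f) (hpos : ∀ u, 0 < f u) (hlt : ∀ u, f u < θ)
    (hbot : Tendsto f atBot (𝓝 θ)) (htop : Tendsto f atTop (𝓝 0)) (hf0 : f 0 = θ / 2)
    (p q : ℕ → ℝ) (x : ℕ → ℕ → ℝ)
    (hp : ∀ j, HasSum (fun k => f (p k - p j)) (q j))
    (hx : ∀ n j, HasSum (fun k => f (x n k - x (n + 1) j)) (q j))
    (hq : ∀ j : ℕ, ((j : ℝ) + 1 / 2) * θ < q j)
    (hqa : ∃ a0 : ℕ, ∀ a, a0 ≤ a → ∀ j, q j + a * θ ≤ q (j + a))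
    (hpt : Tendsto p atTop atTop)
    (H1 : ∀ δ : ℝ, 0 < δ → ∃ K, ∀ k, K ≤ k → ∀ a, p k ≤ p (k + a) + δ)
    (H2 : ∀ a : ℕ, Tendsto (fun k => p (k + a) - p k) atTop (𝓝 0))
    (H3 : Tendsto (fun k => x 0 k - p k) atTop (𝓝 0)) :
    ∀ δ : ℝ, 0 < δ → ∃ N : ℕ, ∀ n, N ≤ n → ∀ k, |x n k - p k| ≤ δ := by
  obtain ⟨a0, ha0⟩ := hqa
  have hxt : Tendsto (x 0) atTop atTop := by
    have := H3.add_atTop hpt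
    exact this.congr fun k => by ring
  have up : ∀ δ : ℝ, 0 < δ → ∃ a : ℕ, ∀ n k, x n k ≤ p (k + a) + δ := by
    intro δ hδ
    obtain ⟨K1, hK1⟩ := H1 (δ / 2) (by linarith)
    obtain ⟨K2, hK2⟩ := eventually_atTop.mp (H3.eventually (gt_mem_nhds (show 0 < δ / 2 by linarith)))
    obtain ⟨M, hM⟩ := ((Finset.range (max K1 K2)).image (x 0)).exists_le
    obtain ⟨A, hA⟩ := eventually_atTop.mp (hpt.eventually_ge_atTop M)
    refine ⟨max a0 A, upper_barrier θ f hf hlt p q x hp hx _ (ha0 _ (le_max_left _ _)) δ ?_⟩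
    intro k
    by_cases hk : k < max K1 K2
    · have h1 := hM (x 0 k) (Finset.mem_image_of_mem _ (Finset.mem_range.mpr hk))
      have h2 := hA (k + max a0 A) (by omega)
      linarith
    · have h1 := hK1 k (by omega) (max a0 A)
      have h2 := hK2 k (by omega)
      linarith
  have low : ∀ δ : ℝ, 0 < δ → ∃ (a : ℕ) (D : ℝ), ∀ n k, lowBar p a D k - δ ≤ x n k := by
    intro δ hδ
    obtain ⟨K1, hK1⟩ := H1 (δ / 2) (by linarith)
    obtain ⟨K2, hK2⟩ := eventually_atTop.mp
      (H3.eventually (lt_mem_nhds (show -(δ / 2) < 0 by linarith)))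
    obtain ⟨M, hM⟩ := ((Finset.range (max K1 K2)).image p).exists_le
    obtain ⟨A, hA⟩ := eventually_atTop.mp (hxt.eventually_ge_atTop M)
    set a := max a0 A with ha
    have ev1 : ∀ᶠ D : ℝ in atTop, ∀ j ∈ Finset.range a,
        (∑ i ∈ Finset.range a, f (D * ((i : ℝ) - a) - D * ((j : ℝ) - a))
      + ∑' k, f (p k - D * ((j : ℝ) - a)) < q j) := by
      rw [Filter.eventually_all_finset]
      intro j hj
      exact steep θ f hf hpos hbot htop hf0 p q hp hpt hq a j (Finset.mem_range.mp hj)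
    have ev2 : ∀ᶠ D : ℝ in atTop, ∀ j ∈ Finset.range a, D * ((j : ℝ) - a) ≤ x 0 j := by
      rw [Filter.eventually_all_finset]
      intro j hj
      have : (j : ℝ) < a := by exact_mod_cast Finset.mem_range.mp hj
      have ht : Tendsto (fun D : ℝ => D * ((j : ℝ) - a)) atTop atBot :=
        tendsto_id.atTop_mul_const_of_neg (by linarith)
      exact ht.eventually_le_atBot _
    obtain ⟨D, hD1, hD2⟩ := (ev1.and ev2).exists
    refine ⟨a, D, lower_barrier θ f hf hpos hlt p q x hp hpt hx a D (ha0 _ (le_max_left _ _)) δ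
      (fun j hj => hD1 j (Finset.mem_range.mpr hj)) ?_⟩
    intro k
    by_cases hk : k < a
    · rw [lowBar, if_pos hk]
      linarith [hD2 k (Finset.mem_range.mpr hk)]
    · obtain ⟨d, rfl⟩ := Nat.exists_eq_add_of_le (not_lt.mp hk)
      have h3 : lowBar p a D (a + d) = p d := by simp [lowBar]
      rw [h3]
      by_cases hd : d < max K1 K2
      · have h1 := hM (p d) (Finset.mem_image_of_mem _ (Finset.mem_range.mpr hd))
        have h2 := hA (a + d) (by omega)
        linarith
      · have h1 := hK1 d (by omega) a
        have h2 := hK2 (a + d) (by omega)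
        rw [add_comm d a] at h1
        linarith
  have tailU : ∀ δ : ℝ, 0 < δ → ∃ K, ∀ n, ∀ k, K ≤ k → x n k ≤ p k + δ := by
    intro δ hδ
    obtain ⟨a, ha⟩ := up (δ / 2) (by linarith)
    obtain ⟨K, hK⟩ := eventually_atTop.mp
      ((H2 a).eventually (gt_mem_nhds (show 0 < δ / 2 by linarith)))
    exact ⟨K, fun n k hk => by linarith [ha n k, hK k hk]⟩
  have tailL : ∀ δ : ℝ, 0 < δ → ∃ K, ∀ n, ∀ k, K ≤ k → p k - δ ≤ x n k := by
    intro δ hδ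
    obtain ⟨a, D, ha⟩ := low (δ / 2) (by linarith)
    obtain ⟨K, hK⟩ := eventually_atTop.mp
      ((H2 a).eventually (gt_mem_nhds (show 0 < δ / 2 by linarith)))
    refine ⟨K + a, fun n k hk => ?_⟩
    obtain ⟨d, rfl⟩ := Nat.exists_eq_add_of_le (show a ≤ k by omega)
    have h3 : lowBar p a D (a + d) = p d := by simp [lowBar]
    have h1 := ha n (a + d)
    have h2 := hK d (by omega)
    rw [h3] at h1
    rw [add_comm d a] at h2
    linarith
  obtain ⟨au, hau⟩ := up 1 one_pos
  obtain ⟨al, D, hal⟩ := low 1 one_pos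
  have slo : ∀ c, Summable fun k => f (lowBar p al D k - 1 - c) := by
    intro c
    have := summable_lowBar f hf hpos p q hp hpt (1 + c) al D
    simpa only [sub_sub] using this
  have shi : ∀ c, Summable fun k => f (p (k + au) + 1 - c) := by
    intro c
    have := summable_shift f hf hpos p q hp hpt (c - 1)
    have := (summable_nat_add_iff au).mpr this
    refine this.congr fun k => ?_
    congr 1; ring
  have cU := limsup_le f hf hc p q _ _ x hp hx hal hau slo shi tailU
  have cL := limsup_le (fun u => -f (-u)) (fun u v h => neg_lt_neg (hf (neg_lt_neg h)))
    (by fun_prop) (fun k => -p k) (fun k => -q k) (fun k => -(p (k + au) + 1))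
    (fun k => -(lowBar p al D k - 1)) (fun n k => -x n k)
    (fun j => by
      have := (hp j).neg
      refine this.congr_fun ?_
      intro k; congr 2; ring)
    (fun n j => by
      have := (hx n j).neg
      refine this.congr_fun ?_
      intro k; congr 2; ring)
    (fun n k => neg_le_neg (hau n k)) (fun n k => neg_le_neg (hal n k))
    (fun c => by
      refine (shi (-c)).neg.congr fun k => ?_
      congr 2; ring)
    (fun c => by
      refine (slo (-c)).neg.congr fun k => ?_
      congr 2; ring)
    (fun δ hδ => by
      obtain ⟨K, hK⟩ := tailL δ hδ
      exact ⟨K, fun n k hk => by linarith [hK n k hk]⟩)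
  intro δ hδ
  obtain ⟨K1, hK1⟩ := tailU δ hδ
  obtain ⟨K2, hK2⟩ := tailL δ hδ
  have ev : ∀ᶠ n in atTop, ∀ k ∈ Finset.range (max K1 K2), |x n k - p k| ≤ δ := by
    rw [Filter.eventually_all_finset]
    intro k _
    obtain ⟨N1, hN1⟩ := cU k δ hδ
    obtain ⟨N2, hN2⟩ := cL k δ hδ
    filter_upwards [eventually_ge_atTop N1, eventually_ge_atTop N2] with n h1 h2
    have a1 := hN1 n h1
    have a2 := hN2 n h2
    rw [abs_le]
    constructor <;> linarith
  obtain ⟨N, hN⟩ := eventually_atTop.mp ev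
  refine ⟨N, fun n hn k => ?_⟩
  by_cases hk : k < max K1 K2
  · exact hN n hn k (Finset.mem_range.mpr hk)
  · have a1 := hK1 n k (by omega)
    have a2 := hK2 n k (by omega)
    rw [abs_le]
    constructor <;> linarith

end core

theorem stmt_3 (θ : ℝ) (hθ : 0 < θ) (hθπ : θ < Real.pi)
    (Q : ℕ → ℝ) (hQpos : ∀ k, 1 ≤ k → 0 < Q k)
    (hQ : (fun k : ℕ => Q k - (k : ℝ)) =O[atTop] fun _ : ℕ => (1 : ℝ))
    (hQ' : ∀ k : ℕ, 1 ≤ k → ((k : ℝ) - 1 / 2) * θ / Real.pi < Q k)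
    (P : ℕ → ℝ) (hPpos : ∀ k, 1 ≤ k → 0 < P k)
    (hfix : ∀ j, 1 ≤ j → phi θ P P j = ENNReal.ofReal (Q j))
    (hPasymp : (fun k : ℕ => Real.log (P k) - (1 + θ / Real.pi) * Real.log k)
      =o[atTop] fun _ : ℕ => (1 : ℝ))
    (X : ℕ → ℕ → ℝ) (hXpos : ∀ n, ∀ k, 1 ≤ k → 0 < X n k)
    (hX0 : (fun k : ℕ => Real.log (X 0 k) - (1 + θ / Real.pi) * Real.log k)
      =o[atTop] fun _ : ℕ => (1 : ℝ))
    (hiter : ∀ n : ℕ, ∀ j, 1 ≤ j → phi θ (X n) (X (n + 1)) j = ENNReal.ofReal (Q j)) :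
    ∀ δ : ℝ, 0 < δ → ∃ N : ℕ, ∀ n, N ≤ n →
      ∀ k, 1 ≤ k → |Real.log (X n k) - Real.log (P k)| ≤ δ := by
  have hπ := Real.pi_pos
  set α := 1 + θ / Real.pi with hα
  have hα0 : 0 < α := by positivity
  obtain ⟨C, hC⟩ := isBigO_one_nat_atTop_iff.mp hQ
  have hL : Tendsto (fun k : ℕ => Real.log ((k + 1 : ℕ) : ℝ)) atTop atTop :=
    (Real.tendsto_log_atTop.comp tendsto_natCast_atTop_atTop).comp (tendsto_add_atTop_nat 1)
  set p : ℕ → ℝ := fun k => Real.log (P (k + 1)) with hpdef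
  have hr : Tendsto (fun k : ℕ => p k - α * Real.log ((k + 1 : ℕ) : ℝ)) atTop (𝓝 0) :=
    ((isLittleO_one_iff ℝ).mp hPasymp).comp (tendsto_add_atTop_nat 1)
  have hr0 : Tendsto (fun k : ℕ => Real.log (X 0 (k + 1)) - α * Real.log ((k + 1 : ℕ) : ℝ))
      atTop (𝓝 0) :=
    ((isLittleO_one_iff ℝ).mp hX0).comp (tendsto_add_atTop_nat 1)
  have main := core θ (fTh θ) (fTh_strictAnti θ hθ hθπ) (fTh_cont θ) (fTh_pos θ)
    (fTh_lt θ hθ hθπ) (fTh_bot θ hθ hθπ) (fTh_top θ hθ hθπ) (fTh_zero θ hθ hθπ)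
    p (fun j => Real.pi * Q (j + 1)) (fun n k => Real.log (X n (k + 1)))
    (fun j => phi_hasSum θ hθ hθπ P P (j + 1) _ hPpos (hPpos _ (by omega)) (hQpos _ (by omega))
      (hfix _ (by omega)))
    (fun n j => phi_hasSum θ hθ hθπ (X n) (X (n + 1)) (j + 1) _ (hXpos n)
      (hXpos _ _ (by omega)) (hQpos _ (by omega)) (hiter n _ (by omega)))
    ?_ ?_ ?_ ?_ ?_ ?_
  · intro δ hδ
    obtain ⟨N, hN⟩ := main δ hδ
    refine ⟨N, fun n hn k hk => ?_⟩
    obtain ⟨d, rfl⟩ := Nat.exists_eq_add_of_le hk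
    have := hN n hn d
    simp only [hpdef] at this
    rwa [add_comm d 1] at this
  · intro j
    have := hQ' (j + 1) (by omega)
    rw [div_lt_iff₀ hπ] at this
    push_cast at this
    linarith
  · obtain ⟨a0, ha0⟩ := exists_nat_ge (2 * C * Real.pi / (Real.pi - θ))
    refine ⟨a0, fun a ha j => ?_⟩
    have h1 : 2 * C * Real.pi ≤ a * (Real.pi - θ) := by
      rw [div_le_iff₀ (by linarith)] at ha0
      have : (a0 : ℝ) ≤ a := by exact_mod_cast ha
      nlinarith
    have h2 := abs_le.mp (Real.norm_eq_abs _ ▸ hC (j + 1))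
    have h3 := abs_le.mp (Real.norm_eq_abs _ ▸ hC (j + a + 1))
    push_cast at h2 h3
    have h4 : (a : ℝ) - 2 * C ≤ Q (j + a + 1) - Q (j + 1) := by linarith [h2.2, h3.1]
    have h5 := mul_le_mul_of_nonneg_left h4 hπ.le
    linarith
  · have := hr.add_atTop (hL.const_mul_atTop hα0)
    exact this.congr fun k => by ring
  · intro δ hδ
    obtain ⟨K, hK⟩ := eventually_atTop.mp
      ((hr.eventually (gt_mem_nhds (show 0 < δ / 2 by linarith))).and
        (hr.eventually (lt_mem_nhds (show -(δ / 2) < 0 by linarith))))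
    refine ⟨K, fun k hk a => ?_⟩
    have h1 := (hK k hk).1
    have h2 := (hK (k + a) (by omega)).2
    have h3 : Real.log ((k + 1 : ℕ) : ℝ) ≤ Real.log ((k + a + 1 : ℕ) : ℝ) := by
      apply Real.log_le_log (by positivity)
      exact_mod_cast (by omega)
    have h4 := mul_le_mul_of_nonneg_left h3 hα0.le
    linarith
  · intro a
    have h1 := hr.comp (tendsto_add_atTop_nat a)
    have h2 : Tendsto (fun k : ℕ => Real.log ((k + a + 1 : ℕ) : ℝ) - Real.log ((k + 1 : ℕ) : ℝ))
        atTop (𝓝 0) := by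
      have h3 : Tendsto (fun k : ℕ => 1 + (a : ℝ) / ((k : ℝ) + 1)) atTop (𝓝 (1 + 0)) := by
        refine tendsto_const_nhds.add ?_
        refine tendsto_const_nhds.div_atTop ?_
        exact tendsto_atTop_add_const_right _ _ tendsto_natCast_atTop_atTop
      have h4 := h3.log (by norm_num)
      rw [add_zero, Real.log_one] at h4
      refine h4.congr fun k => ?_
      rw [← Real.log_div (by positivity) (by positivity)]
      congr 1
      push_cast
      field_simp
      ring
    have h5 := (h1.sub hr).add (h2.const_mul α)
    simp only [sub_zero, mul_zero, add_zero] at h5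
    refine h5.congr fun k => ?_
    simp only [Function.comp]
    ring
  · have := hr0.sub hr
    rw [sub_zero] at this
    exact this.congr fun k => by ring
end
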